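/- arXiv:2002.12155 — 11 statements merged into one kernel-verified Lean document; each statement's English description precedes it below -/
import Mathlib

section
/- Let j and k be positive integers such that j and j+k have the same set of prime divisors, and let g = gcd(j, j+k). If Hypothesis P(j/g, (j+k)/g) holds, then Hypothesis S_k holds, i.e. the equation φ(n) = φ(n+k) has infinitely many solutions n. -/
/-!
Write `j = g * a` and `j + k = g * b` with `g = gcd j (j + k)`. If `p = a * r + 1` and
`q = b * r + 1` are primes, then `n = j * q` satisfies `n + k = (j + k) * p`, because
`j * b = (j + k) * a`. When moreover `r` is large enough that `q ∤ j` and `p ∤ j + k`, one gets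
`φ n = φ j * (b * r)` and `φ (n + k) = φ (j + k) * (a * r)`. These agree because `φ m / m` depends
only on the set of prime divisors of `m`.
-/

theorem totient_mul_eq_totient_mul_of_primeFactors_eq {m n : ℕ}
    (h : m.primeFactors = n.primeFactors) : m.totient * n = n.totient * m := by
  have hcast : (m.totient * n : ℚ) = n.totient * m := by
    rw [Nat.totient_eq_mul_prod_factors m, Nat.totient_eq_mul_prod_factors n, h]
    ring
  exact_mod_cast hcast

theorem totient_mul_eq_totient_mul_of_mul_eq_mul {m n x y : ℕ} (hn : n ≠ 0)
    (h : m.primeFactors = n.primeFactors) (hxy : m * y = n * x) :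
    m.totient * y = n.totient * x := by
  refine Nat.eq_of_mul_eq_mul_left hn.pos ?_
  calc n * (m.totient * y) = (m.totient * n) * y := by ring
    _ = n.totient * (m * y) := by
      rw [totient_mul_eq_totient_mul_of_primeFactors_eq h, mul_assoc]
    _ = n * (n.totient * x) := by rw [hxy]; ring

theorem totient_mul_prime_eq_totient_mul_prime {m n p q : ℕ}
    (h : m.primeFactors = n.primeFactors) (hp : p.Prime) (hq : q.Prime)
    (hpn : ¬ p ∣ n) (hqm : ¬ q ∣ m) (hpq : m * (q - 1) = n * (p - 1)) :
    (m * q).totient = (n * p).totient := by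
  have hn : n ≠ 0 := fun hn ↦ hpn (hn ▸ dvd_zero p)
  rw [mul_comm m, mul_comm n, Nat.totient_mul_of_prime_of_not_dvd hq hqm,
    Nat.totient_mul_of_prime_of_not_dvd hp hpn, mul_comm (q - 1), mul_comm (p - 1)]
  exact totient_mul_eq_totient_mul_of_mul_eq_mul hn h hpq

theorem lt_of_prime_mul_add_one {a r : ℕ} (h : (a * r + 1).Prime) : r < a * r + 1 := by
  have ha : 0 < a := Nat.pos_of_ne_zero fun ha ↦ by simp [ha, Nat.not_prime_one] at h
  exact Nat.lt_succ_of_le (Nat.le_mul_of_pos_left r ha)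

/-- Euler's totient is `Nat.totient`.  Hypothesis `P(a,b)`: there are infinitely many
positive integers `n` with `a*n+1` and `b*n+1` both prime.  Hypothesis `S_k`:
`φ(n) = φ(n+k)` has infinitely many solutions in positive integers `n`. -/
theorem stmt_0 (j k : ℕ) (hj : 0 < j) (hk : 0 < k)
    (hpf : j.primeFactors = (j + k).primeFactors)
    (hP : {n : ℕ | 0 < n ∧ (j / Nat.gcd j (j + k) * n + 1).Prime ∧
        ((j + k) / Nat.gcd j (j + k) * n + 1).Prime}.Infinite) :
    {n : ℕ | 0 < n ∧ Nat.totient n = Nat.totient (n + k)}.Infinite := by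
  set a := j / Nat.gcd j (j + k)
  set b := (j + k) / Nat.gcd j (j + k)
  have hab : j * b = (j + k) * a := by
    rw [← Nat.mul_div_assoc _ (Nat.gcd_dvd_right _ _), ← Nat.mul_div_assoc _ (Nat.gcd_dvd_left _ _),
      mul_comm]
  refine Set.infinite_of_forall_exists_gt fun N ↦ ?_
  obtain ⟨r, ⟨-, hp, hq⟩, hr⟩ := hP.exists_gt (N + (j + k))
  have hrp : r < a * r + 1 := lt_of_prime_mul_add_one hp
  have hrq : r < b * r + 1 := lt_of_prime_mul_add_one hq
  have hpjk : ¬ a * r + 1 ∣ j + k := Nat.not_dvd_of_pos_of_lt (by omega) (by omega)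
  have hqj : ¬ b * r + 1 ∣ j := Nat.not_dvd_of_pos_of_lt hj (by omega)
  have habr : j * (b * r) = (j + k) * (a * r) := by rw [← mul_assoc, hab, mul_assoc]
  have hshift : j * (b * r + 1) + k = (j + k) * (a * r + 1) := by
    rw [mul_add_one, mul_add_one, habr, add_assoc]
  have hN : N < j * (b * r + 1) :=
    lt_of_lt_of_le (by omega) (Nat.le_mul_of_pos_left (b * r + 1) hj)
  refine ⟨j * (b * r + 1), ⟨Nat.zero_lt_of_lt hN, ?_⟩, hN⟩
  rw [hshift]
  exact totient_mul_prime_eq_totient_mul_prime hpf hp hq hpjk hqj habr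
end

section
/- Let a < b be positive integers and assume Hypothesis P(a,b). Then Hypothesis S_k holds for every positive integer k that is a multiple of κ(a,b); that is, for every positive integer ℓ, the equation φ(n) = φ(n + ℓ·κ(a,b)) has infinitely many solutions n. -/
/-- For positive integers `a < b`, with `a' = a/gcd(a,b)`, `b' = b/gcd(a,b)`,
`κ(a,b) = (b' - a') · ∏_{p | a'b'} p`. -/
def kappa (a b : ℕ) : ℕ :=
  (b / Nat.gcd a b - a / Nat.gcd a b) *
    ∏ p ∈ ((a / Nat.gcd a b) * (b / Nat.gcd a b)).primeFactors, p

/-! Put `a = g c`, `b = g d` with `g = gcd(a,b)`, and let `m` be divisible by every prime factor of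
`c d`. If `p = a n + 1` and `q = b n + 1` are primes not dividing `m`, then
`m d p - m c q = m (d - c)`, while `φ(m c q) = φ(m) c (b n) = φ(m) d (a n) = φ(m d p)`.
With `m = ℓ ∏_{p ∣ cd} p` the difference `m (d - c)` is `ℓ κ(a,b)`. -/

theorem prod_primeFactors_pos (n : ℕ) : 0 < ∏ p ∈ n.primeFactors, p :=
  Finset.prod_pos fun _ hp ↦ Nat.pos_of_mem_primeFactors hp

theorem totient_mul_of_primeFactors_subset {m c : ℕ} (h : c.primeFactors ⊆ m.primeFactors) :
    Nat.totient (m * c) = Nat.totient m * c := by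
  rcases eq_or_ne m 0 with rfl | hm
  · simp
  rcases eq_or_ne c 0 with rfl | hc
  · simp
  have hprimes : (m * c).primeFactors = m.primeFactors := by
    rw [Nat.primeFactors_mul hm hc, Finset.union_eq_left.mpr h]
  apply Nat.eq_of_mul_eq_mul_right (prod_primeFactors_pos m)
  calc Nat.totient (m * c) * ∏ p ∈ m.primeFactors, p
      = m * c * ∏ p ∈ m.primeFactors, (p - 1) := by
        simpa only [hprimes] using Nat.totient_mul_prod_primeFactors (m * c)
    _ = Nat.totient m * (∏ p ∈ m.primeFactors, p) * c := by
        rw [Nat.totient_mul_prod_primeFactors, mul_right_comm]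
    _ = Nat.totient m * c * ∏ p ∈ m.primeFactors, p := mul_right_comm _ _ _

theorem totient_mul_mul_prime_of_primeFactors_subset {m c p : ℕ}
    (h : c.primeFactors ⊆ m.primeFactors) (hp : p.Prime) (hpm : ¬p ∣ m) :
    Nat.totient (m * c * p) = Nat.totient m * c * (p - 1) := by
  rcases eq_or_ne c 0 with rfl | hc
  · simp
  have hpc : ¬p ∣ c := fun hdvd ↦
    hpm (Nat.dvd_of_mem_primeFactors (h (hp.mem_primeFactors hdvd hc)))
  rw [mul_comm, Nat.totient_mul_of_prime_of_not_dvd hp (hp.not_dvd_mul hpm hpc),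
    totient_mul_of_primeFactors_subset h, mul_comm]

theorem totient_eq_totient_add_of_prime {m c d x : ℕ} (hcd : c ≤ d)
    (hcm : c.primeFactors ⊆ m.primeFactors) (hdm : d.primeFactors ⊆ m.primeFactors)
    (hp : (c * x + 1).Prime) (hpm : ¬c * x + 1 ∣ m)
    (hq : (d * x + 1).Prime) (hqm : ¬d * x + 1 ∣ m) :
    Nat.totient (m * c * (d * x + 1)) =
      Nat.totient (m * c * (d * x + 1) + m * (d - c)) := by
  have hshift : m * c * (d * x + 1) + m * (d - c) = m * d * (c * x + 1) := by
    obtain ⟨e, rfl⟩ := Nat.exists_eq_add_of_le hcd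
    rw [Nat.add_sub_cancel_left]
    ring
  rw [hshift, totient_mul_mul_prime_of_primeFactors_subset hcm hq hqm,
    totient_mul_mul_prime_of_primeFactors_subset hdm hp hpm,
    Nat.add_sub_cancel, Nat.add_sub_cancel]
  ring

theorem infinite_totient_eq_totient_add {m c d : ℕ} (hm : 0 < m) (hcd : c ≤ d)
    (hcm : c.primeFactors ⊆ m.primeFactors) (hdm : d.primeFactors ⊆ m.primeFactors)
    (hP : {x : ℕ | (c * x + 1).Prime ∧ (d * x + 1).Prime}.Infinite) :
    {n : ℕ | 0 < n ∧ Nat.totient n = Nat.totient (n + m * (d - c))}.Infinite := by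
  have hc : 0 < c := by
    obtain ⟨x, hp, -⟩ := hP.nonempty
    exact Nat.pos_of_ne_zero fun h ↦ Nat.not_prime_one (by simpa [h] using hp)
  refine Set.infinite_of_forall_exists_gt fun N ↦ ?_
  obtain ⟨x, ⟨hp, hq⟩, hx⟩ := hP.exists_gt (max m N)
  obtain ⟨hmx, hNx⟩ := max_lt_iff.mp hx
  have not_dvd {e : ℕ} (he : 0 < e) : ¬e * x + 1 ∣ m :=
    Nat.not_dvd_of_pos_of_lt hm <|
      (hmx.trans_le (Nat.le_mul_of_pos_left x he)).trans (Nat.lt_succ_self _)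
  have hd : 0 < d := hc.trans_le hcd
  refine ⟨m * c * (d * x + 1), ⟨by positivity, ?_⟩, ?_⟩
  · exact totient_eq_totient_add_of_prime hcd hcm hdm hp (not_dvd hc) hq (not_dvd hd)
  · calc N < x := hNx
      _ ≤ d * x := Nat.le_mul_of_pos_left x hd
      _ ≤ d * x + 1 := Nat.le_succ _
      _ ≤ m * c * (d * x + 1) := Nat.le_mul_of_pos_left _ (Nat.mul_pos hm hc)

theorem primeFactors_subset_primeFactors_mul_prod {k N ℓ : ℕ} (hkN : k ∣ N) (hN : N ≠ 0)
    (hℓ : ℓ ≠ 0) : k.primeFactors ⊆ (ℓ * ∏ p ∈ N.primeFactors, p).primeFactors :=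
  calc k.primeFactors ⊆ N.primeFactors := Nat.primeFactors_mono hkN hN
    _ = (∏ p ∈ N.primeFactors, p).primeFactors :=
        (Nat.primeFactors_prod_primeFactors N).symm
    _ ⊆ (ℓ * ∏ p ∈ N.primeFactors, p).primeFactors :=
        Nat.primeFactors_mono (dvd_mul_left _ _) (mul_ne_zero hℓ (prod_primeFactors_pos N).ne')

/-- If `P(a,b)` holds (infinitely many `n` with `a*n+1`, `b*n+1` both prime), then
`S_k` holds for every positive multiple `k = ℓ·κ(a,b)` of `κ(a,b)`. -/
theorem stmt_2 (a b : ℕ) (ha : 0 < a) (hab : a < b)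
    (hP : {n : ℕ | 0 < n ∧ (a * n + 1).Prime ∧ (b * n + 1).Prime}.Infinite) :
    ∀ ℓ : ℕ, 0 < ℓ →
      {n : ℕ | 0 < n ∧ Nat.totient n = Nat.totient (n + ℓ * kappa a b)}.Infinite := by
  intro ℓ hℓ
  set g := Nat.gcd a b
  set c := a / g
  set d := b / g
  set r := ∏ p ∈ (c * d).primeFactors, p
  have hg_pos : 0 < g := Nat.gcd_pos_of_pos_left b ha
  have hcg : c * g = a := Nat.div_mul_cancel (Nat.gcd_dvd_left a b)
  have hdg : d * g = b := Nat.div_mul_cancel (Nat.gcd_dvd_right a b)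
  have hcd : c ≤ d := Nat.div_le_div_right hab.le
  have hcd_ne : c * d ≠ 0 :=
    mul_ne_zero (left_ne_zero_of_mul (hcg.trans_ne ha.ne'))
      (left_ne_zero_of_mul (hdg.trans_ne (ha.trans hab).ne'))
  have hP' : {x : ℕ | (c * x + 1).Prime ∧ (d * x + 1).Prime}.Infinite := by
    refine (hP.image (mul_right_injective₀ hg_pos.ne').injOn).mono ?_
    rintro _ ⟨n, ⟨-, hp, hq⟩, rfl⟩
    exact ⟨by rwa [← mul_assoc, hcg], by rwa [← mul_assoc, hdg]⟩
  rw [show ℓ * kappa a b = ℓ * r * (d - c) by rw [kappa, mul_comm (_ - _), ← mul_assoc]]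
  exact infinite_totient_eq_totient_add (Nat.mul_pos hℓ (prod_primeFactors_pos _)) hcd
    (primeFactors_subset_primeFactors_mul_prod (dvd_mul_right c d) hcd_ne hℓ.ne')
    (primeFactors_subset_primeFactors_mul_prod (dvd_mul_left d c) hcd_ne hℓ.ne') hP'
end

section
/- Assume that for every choice of 50 pairwise distinct positive integers a₁, …, a₅₀ there exist indices i ≠ j such that there are infinitely many positive integers n with aᵢn+1 and aⱼn+1 both prime. Then for every positive integer k that is a multiple of 442720643463713815200, the equation φ(n) = φ(n+k) has infinitely many solutions n. -/
/-!
Suppose `p = u * c + 1` and `q = v * c + 1` are prime, `k = (v - u) * t`, and every prime factor of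
`u * v` divides `t`. Then `n = u * t * q` satisfies `n + k = v * t * p`, and both totients are equal
to `u * v * c * φ t`.

So it is enough to find 50 coefficients whose prime factors divide `k` and whose pairwise
differences, divided by the corresponding gcd, divide `k`. The number 442720643463713815200 is
`lcm(1, …, 48)`. The coefficients `1, 2, …, 50` fail only because `50 - 1 = 7 ^ 2` does not divide
it; doubling them all and replacing the resulting `2` by `49` removes this obstruction: the only new
differences exceeding 48 are `98 - 49`, whose reduced value is 1, and `100 - 49 = 3 * 17`.
-/

section

open Finset Nat

theorem totient_mul_of_primeFactors_subset_s5 {u t : ℕ} (h : u.primeFactors ⊆ t.primeFactors) :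
    φ (u * t) = u * φ t := by
  obtain rfl | hu := eq_or_ne u 0
  · simp
  obtain rfl | ht := eq_or_ne t 0
  · simp
  have hprimes : (u * t).primeFactors = t.primeFactors := by
    rw [primeFactors_mul hu ht, union_eq_right.2 h]
  rw [← Nat.cast_inj (R := ℚ), Nat.cast_mul, totient_eq_mul_prod_factors,
    totient_eq_mul_prod_factors, hprimes, Nat.cast_mul, mul_assoc]

theorem primeFactors_subset_of_coprime_left {u d t : ℕ} (hud : u.Coprime d)
    (h : u.primeFactors ⊆ (d * t).primeFactors) : u.primeFactors ⊆ t.primeFactors := by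
  intro p hp
  have hpu := dvd_of_mem_primeFactors hp
  obtain ⟨hp', hpdt, hdt⟩ := mem_primeFactors.1 (h hp)
  exact mem_primeFactors.2 ⟨hp', (hud.coprime_dvd_left hpu).dvd_of_dvd_mul_left hpdt,
    right_ne_zero_of_mul hdt⟩

theorem totient_mul_prime_eq_totient_mul_prime_s5 {u v t c : ℕ}
    (hut : u.primeFactors ⊆ t.primeFactors) (hvt : v.primeFactors ⊆ t.primeFactors)
    (hp : (u * c + 1).Prime) (hq : (v * c + 1).Prime)
    (hvp : (v * t).Coprime (u * c + 1)) (huq : (u * t).Coprime (v * c + 1)) :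
    φ (u * t * (v * c + 1)) = φ (v * t * (u * c + 1)) := by
  rw [totient_mul huq, totient_mul hvp, totient_prime hp, totient_prime hq,
    totient_mul_of_primeFactors_subset_s5 hut, totient_mul_of_primeFactors_subset_s5 hvt,
    Nat.add_sub_cancel, Nat.add_sub_cancel]
  ring

theorem infinite_totient_eq_totient_add_sub_mul {u v t : ℕ} (hu : 0 < u) (huv : u ≤ v)
    (ht : 0 < t) (hut : u.primeFactors ⊆ t.primeFactors) (hvt : v.primeFactors ⊆ t.primeFactors)
    (hinf : {c : ℕ | (u * c + 1).Prime ∧ (v * c + 1).Prime}.Infinite) :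
    {n : ℕ | 0 < n ∧ φ n = φ (n + (v - u) * t)}.Infinite := by
  refine Set.infinite_of_forall_exists_gt fun N ↦ ?_
  obtain ⟨c, ⟨hp, hq⟩, hc⟩ := hinf.exists_gt (N + v * t)
  have hv : 0 < v := hu.trans_le huv
  have hcu : c ≤ u * c := Nat.le_mul_of_pos_left c hu
  have hcv : c ≤ v * c := Nat.le_mul_of_pos_left c hv
  have hutvt : u * t ≤ v * t := Nat.mul_le_mul_right t huv
  have hut0 : 0 < u * t := Nat.mul_pos hu ht
  have hvp : (v * t).Coprime (u * c + 1) :=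
    (coprime_of_lt_prime (Nat.mul_pos hv ht).ne' (by lia) hp).symm
  have huq : (u * t).Coprime (v * c + 1) :=
    (coprime_of_lt_prime hut0.ne' (by lia) hq).symm
  have hshift : u * t * (v * c + 1) + (v - u) * t = v * t * (u * c + 1) := by
    obtain ⟨d, rfl⟩ := Nat.exists_eq_add_of_le huv
    rw [Nat.add_sub_cancel_left]
    ring
  refine ⟨u * t * (v * c + 1), ⟨by positivity, ?_⟩, ?_⟩
  · rw [hshift, totient_mul_prime_eq_totient_mul_prime_s5 hut hvt hp hq hvp huq]
  · calc N < v * c + 1 := by lia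
      _ ≤ u * t * (v * c + 1) := Nat.le_mul_of_pos_left _ hut0

theorem infinite_totient_eq_totient_add_of_sub_div_gcd_dvd {a b k : ℕ} (ha : 0 < a) (hab : a ≤ b)
    (hk : 0 < k) (hdvd : (b - a) / a.gcd b ∣ k)
    (hak : a.primeFactors ⊆ k.primeFactors) (hbk : b.primeFactors ⊆ k.primeFactors)
    (hinf : {n : ℕ | (a * n + 1).Prime ∧ (b * n + 1).Prime}.Infinite) :
    {n : ℕ | 0 < n ∧ φ n = φ (n + k)}.Infinite := by
  have hb : 0 < b := ha.trans_le hab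
  have hg : 0 < a.gcd b := Nat.gcd_pos_of_pos_left b ha
  obtain ⟨u, v, huv, hau, hbv⟩ := Nat.exists_coprime a b
  generalize a.gcd b = g at *
  subst hau hbv
  rw [← Nat.sub_mul, Nat.mul_div_cancel _ hg] at hdvd
  obtain ⟨t, rfl⟩ := hdvd
  have hle : u ≤ v := Nat.le_of_mul_le_mul_right hab hg
  have hut : u.primeFactors ⊆ t.primeFactors :=
    primeFactors_subset_of_coprime_left ((coprime_sub_self_right hle).2 huv)
      ((primeFactors_mono (Nat.dvd_mul_right u g) ha.ne').trans hak)
  have hvt : v.primeFactors ⊆ t.primeFactors :=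
    primeFactors_subset_of_coprime_left ((coprime_self_sub_right hle).2 huv.symm)
      ((primeFactors_mono (Nat.dvd_mul_right v g) hb.ne').trans hbk)
  have hinf' : {c : ℕ | (u * c + 1).Prime ∧ (v * c + 1).Prime}.Infinite := by
    refine (hinf.image (mul_right_injective₀ hg.ne').injOn).mono ?_
    rintro _ ⟨n, ⟨hp, hq⟩, rfl⟩
    exact ⟨by rwa [← mul_assoc], by rwa [← mul_assoc]⟩
  exact infinite_totient_eq_totient_add_sub_mul (Nat.pos_of_mul_pos_right ha) hle
    (Nat.pos_of_mul_pos_left hk) hut hvt hinf'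

theorem sub_div_gcd_pos {a b : ℕ} (hab : a < b) : 0 < (b - a) / a.gcd b := by
  have hdvd : a.gcd b ∣ b - a := Nat.dvd_sub (Nat.gcd_dvd_right a b) (Nat.gcd_dvd_left a b)
  exact Nat.div_pos (le_of_dvd (Nat.sub_pos_of_lt hab) hdvd) (Nat.gcd_pos_of_pos_right a (by lia))

theorem dvd_lcm_Icc_one {d m : ℕ} (hd : 0 < d) (hdm : d ≤ m) : d ∣ (Icc 1 m).lcm id :=
  dvd_lcm (f := id) (mem_Icc.2 ⟨hd, hdm⟩)

theorem lcm_Icc_one_fortyEight : (Icc 1 48).lcm id = 442720643463713815200 := by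
  decide +kernel

/-- The coefficients `a` of the 50 linear forms `a * n + 1` to which the prime tuples hypothesis is
applied: the doubles of `2, 3, …, 50` together with `49`. -/
def formCoefficients : Finset ℕ :=
  insert 49 ((Icc 2 50).image (2 * ·))

theorem mem_formCoefficients {a : ℕ} :
    a ∈ formCoefficients ↔ a = 49 ∨ ∃ b, 2 ≤ b ∧ b ≤ 50 ∧ 2 * b = a := by
  simp [formCoefficients, and_assoc]

theorem card_formCoefficients : #formCoefficients = 50 := by
  decide

theorem pos_of_mem_formCoefficients {a : ℕ} (ha : a ∈ formCoefficients) : 0 < a := by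
  rcases mem_formCoefficients.1 ha with rfl | ⟨b, hb, -, rfl⟩ <;> lia

theorem prime_le_fortySeven_of_dvd_formCoefficient {a p : ℕ} (ha : a ∈ formCoefficients)
    (hp : p.Prime) (hpa : p ∣ a) : p ≤ 47 := by
  rcases mem_formCoefficients.1 ha with rfl | ⟨b, hb₂, hb₅₀, rfl⟩
  · have hp7 : p ∣ 7 := hp.dvd_of_dvd_pow (n := 2) hpa
    have : p ≤ 7 := le_of_dvd (by lia) hp7
    lia
  · rcases hp.dvd_mul.1 hpa with hp2 | hpb
    · have : p ≤ 2 := le_of_dvd two_pos hp2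
      lia
    · have : p ≤ b := le_of_dvd (by lia) hpb
      have : p ≠ 48 := by rintro rfl; norm_num at hp
      have : p ≠ 49 := by rintro rfl; norm_num at hp
      have : p ≠ 50 := by rintro rfl; norm_num at hp
      lia

theorem primeFactors_formCoefficient_subset {a : ℕ} (ha : a ∈ formCoefficients) :
    a.primeFactors ⊆ ((Icc 1 48).lcm id).primeFactors := by
  intro p hp
  have hp' : p.Prime := prime_of_mem_primeFactors hp
  have hp47 := prime_le_fortySeven_of_dvd_formCoefficient ha hp' (dvd_of_mem_primeFactors hp)
  refine mem_primeFactors.2 ⟨hp', dvd_lcm_Icc_one hp'.pos (by lia), ?_⟩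
  rw [lcm_Icc_one_fortyEight]
  norm_num

theorem sub_div_gcd_formCoefficients_le {a b : ℕ} (ha : a ∈ formCoefficients)
    (hb : b ∈ formCoefficients) (hab : a < b) :
    (b - a) / a.gcd b ≤ 48 ∨ a = 49 ∧ b = 100 := by
  rcases mem_formCoefficients.1 ha with rfl | ⟨c, hc₂, -, rfl⟩ <;>
    rcases mem_formCoefficients.1 hb with rfl | ⟨d, -, hd₅₀, rfl⟩
  · exact absurd hab (lt_irrefl 49)
  · obtain hd | rfl | rfl : d ≤ 48 ∨ d = 49 ∨ d = 50 := by lia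
    · exact .inl ((Nat.div_le_self _ _).trans (by lia))
    · exact .inl (by norm_num)
    · exact .inr ⟨rfl, rfl⟩
  · exact .inl ((Nat.div_le_self _ _).trans (by lia))
  · rw [Nat.gcd_mul_left, ← Nat.mul_sub, Nat.mul_div_mul_left _ _ two_pos]
    exact .inl ((Nat.div_le_self _ _).trans (by lia))

theorem sub_div_gcd_formCoefficients_dvd {a b : ℕ} (ha : a ∈ formCoefficients)
    (hb : b ∈ formCoefficients) (hab : a < b) : (b - a) / a.gcd b ∣ (Icc 1 48).lcm id := by
  rcases sub_div_gcd_formCoefficients_le ha hb hab with hle | ⟨rfl, rfl⟩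
  · exact dvd_lcm_Icc_one (sub_div_gcd_pos hab) hle
  · have h51 : 3 * 17 ∣ (Icc 1 48).lcm id := Nat.Coprime.mul_dvd_of_dvd_of_dvd (by norm_num)
      (dvd_lcm_Icc_one (by norm_num) (by norm_num)) (dvd_lcm_Icc_one (by norm_num) (by norm_num))
    simpa using h51

end

/-- Assuming the consequence of `DHL*(50;2)` (for any 50 pairwise distinct positive
integers `a₁,…,a₅₀` some pair of forms `aᵢn+1`, `aⱼn+1` is simultaneously prime
infinitely often), the equation `φ(n) = φ(n+k)` has infinitely many solutions for
every positive multiple `k` of `442720643463713815200`. -/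
theorem stmt_5
    (hDHL : ∀ a : Fin 50 → ℕ, (∀ i, 0 < a i) → Function.Injective a →
      ∃ i j : Fin 50, i ≠ j ∧
        {n : ℕ | 0 < n ∧ (a i * n + 1).Prime ∧ (a j * n + 1).Prime}.Infinite) :
    ∀ k : ℕ, 0 < k → 442720643463713815200 ∣ k →
      {n : ℕ | 0 < n ∧ Nat.totient n = Nat.totient (n + k)}.Infinite := by
  intro k hk hKk
  rw [← lcm_Icc_one_fortyEight] at hKk
  let a := formCoefficients.orderEmbOfFin card_formCoefficients
  have ha (i : Fin 50) : a i ∈ formCoefficients :=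
    Finset.orderEmbOfFin_mem _ card_formCoefficients i
  have hpos (i : Fin 50) : 0 < a i := pos_of_mem_formCoefficients (ha i)
  have hprimes (i : Fin 50) : (a i).primeFactors ⊆ k.primeFactors :=
    (primeFactors_formCoefficient_subset (ha i)).trans (Nat.primeFactors_mono hKk hk.ne')
  obtain ⟨i, j, hij, hinf⟩ := hDHL a hpos a.injective
  wlog hlt : i < j generalizing i j
  · exact this j i hij.symm (by simpa only [and_comm] using hinf) (hij.symm.lt_of_le (not_lt.1 hlt))
  have hab : a i < a j := a.strictMono hlt
  exact infinite_totient_eq_totient_add_of_sub_div_gcd_dvd (hpos i) hab.le hk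
    ((sub_div_gcd_formCoefficients_dvd (ha i) (ha j) hab).trans hKk) (hprimes i) (hprimes j)
    (hinf.mono fun _ hn ↦ hn.2)
end

section
/- Assume that for every choice of 50 pairwise distinct positive integers a₁, …, a₅₀ there exist indices i ≠ j such that there are infinitely many positive integers n with aᵢn+1 and aⱼn+1 both prime. Then there is an even positive integer ℓ ≤ 3570 such that for every positive integer k divisible by ℓ, the equation φ(n) = φ(n+k) has infinitely many solutions n; consequently, for every real x ≥ 1, the number of positive integers k ≤ x for which φ(n) = φ(n+k) has infinitely many solutions is at least ⌊x/3570⌋. -/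
/-!
Let `a < b`, put `A = a / gcd(a, b)` and `B = b / gcd(a, b)`, and suppose that `p = a n + 1` and
`q = b n + 1` are prime. If every prime factor of `A B` divides `m`, while `p` and `q` do not,
then `φ(m q A) = A b n φ(m)` and `φ(m p B) = B a n φ(m)` agree because `A b = B a`, and the two
arguments differ by `m p B - m q A = m (B - A)`. So every positive multiple of `rad(A B) (B - A)`
is a shift with infinitely many solutions as soon as infinitely many such `n` exist. It remains to
choose `50` coefficients, all of them `5`-smooth so that `rad(A B)` divides `30`, for which each of
these numbers is at most `3570`.
-/

open UniqueFactorizationMonoid (radical radical_dvd_self radical_dvd_radical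
  dvd_radical_iff_of_irreducible exists_dvd_pow_iff_radical_dvd)

/-- The assertion `S_k`: the equation `φ(n) = φ(n + k)` has infinitely many positive solutions. -/
def IsTotientShift (k : ℕ) : Prop :=
  {n : ℕ | 0 < n ∧ Nat.totient n = Nat.totient (n + k)}.Infinite

/-- The positive integers at which the linear forms `a n + 1` and `b n + 1` are both prime. -/
def primePairs (a b : ℕ) : Set ℕ :=
  {n : ℕ | 0 < n ∧ (a * n + 1).Prime ∧ (b * n + 1).Prime}

/-- The number `rad(A B) (B - A)`, where `A = a / gcd(a, b)` and `B = b / gcd(a, b)`: the shift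
produced by simultaneous prime values of `a n + 1` and `b n + 1`. The subtraction is truncated, so
this is meant for `a < b`. -/
noncomputable def pairShift (a b : ℕ) : ℕ :=
  radical (a / a.gcd b * (b / a.gcd b)) * (b / a.gcd b - a / a.gcd b)

lemma primePairs_comm (a b : ℕ) : primePairs a b = primePairs b a := by
  ext n
  simp only [primePairs, Set.mem_ofPred_eq, and_comm (a := (a * n + 1).Prime)]

lemma exists_lt_infinite_primePairs {k : ℕ} {S : Finset ℕ} (hcard : S.card = k)
    (hpos : ∀ a ∈ S, 0 < a)
    (h : ∀ a : Fin k → ℕ, (∀ i, 0 < a i) → Function.Injective a →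
      ∃ i j, i ≠ j ∧ (primePairs (a i) (a j)).Infinite) :
    ∃ a ∈ S, ∃ b ∈ S, a < b ∧ (primePairs a b).Infinite := by
  let e := S.orderEmbOfFin hcard
  have he (i : Fin k) : e i ∈ S := S.orderEmbOfFin_mem hcard i
  obtain ⟨i, j, hij, hinf⟩ := h e (fun i ↦ hpos _ (he i)) e.injective
  rcases hij.lt_or_gt with hlt | hgt
  · exact ⟨e i, he i, e j, he j, e.strictMono hlt, hinf⟩
  · exact ⟨e j, he j, e i, he i, e.strictMono hgt, primePairs_comm (e i) (e j) ▸ hinf⟩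

lemma totient_mul_of_radical_dvd {m A : ℕ} (h : radical A ∣ m) :
    Nat.totient (m * A) = A * Nat.totient m := by
  rcases eq_or_ne m 0 with rfl | hm
  · simp
  rcases eq_or_ne A 0 with rfl | hA
  · simp
  have hprimes : (m * A).primeFactors = m.primeFactors := by
    rw [Nat.primeFactors_mul hm hA]
    exact Finset.union_eq_left.2 ((Nat.radical_dvd_iff hm).1 h)
  have hrad : 0 < ∏ p ∈ m.primeFactors, p :=
    Finset.prod_pos fun _ hp ↦ Nat.pos_of_mem_primeFactors hp
  refine Nat.eq_of_mul_eq_mul_right hrad ?_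
  calc
    Nat.totient (m * A) * ∏ p ∈ m.primeFactors, p
        = m * A * ∏ p ∈ m.primeFactors, (p - 1) := by
      rw [← hprimes, Nat.totient_mul_prod_primeFactors]
    _ = A * (Nat.totient m * ∏ p ∈ m.primeFactors, p) := by
      rw [Nat.totient_mul_prod_primeFactors]
      ring
    _ = A * Nat.totient m * ∏ p ∈ m.primeFactors, p := (mul_assoc _ _ _).symm

lemma totient_mul_prime_mul {m A p : ℕ} (hA : radical A ∣ m) (hp : p.Prime) (hpm : ¬ p ∣ m) :
    Nat.totient (m * p * A) = A * (p - 1) * Nat.totient m := by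
  rw [totient_mul_of_radical_dvd (hA.mul_right p), mul_comm m p,
    Nat.totient_mul_of_prime_of_not_dvd hp hpm, mul_assoc]

lemma totient_eq_totient_add {a b A B m n : ℕ} (hAB : A ≤ B) (h : a * B = b * A)
    (hA : radical A ∣ m) (hB : radical B ∣ m)
    (hp : (a * n + 1).Prime) (hpm : ¬ a * n + 1 ∣ m)
    (hq : (b * n + 1).Prime) (hqm : ¬ b * n + 1 ∣ m) :
    Nat.totient (m * (b * n + 1) * A) =
      Nat.totient (m * (b * n + 1) * A + m * (B - A)) := by
  have hshift : m * (b * n + 1) * A + m * (B - A) = m * (a * n + 1) * B := by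
    obtain ⟨d, rfl⟩ := Nat.exists_eq_add_of_le hAB
    rw [Nat.add_sub_cancel_left]
    linear_combination m * n * h.symm
  rw [hshift, totient_mul_prime_mul hA hq hqm, totient_mul_prime_mul hB hp hpm]
  simp only [Nat.add_sub_cancel]
  linear_combination n * Nat.totient m * h.symm

lemma isTotientShift_mul_sub {a b A B m : ℕ} (ha : 0 < a) (hb : 0 < b) (hA₀ : 0 < A)
    (hAB : A ≤ B) (h : a * B = b * A) (hm : 0 < m) (hA : radical A ∣ m) (hB : radical B ∣ m)
    (hinf : (primePairs a b).Infinite) : IsTotientShift (m * (B - A)) := by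
  have hinj : Function.Injective fun n ↦ m * (b * n + 1) * A := fun x y hxy ↦ by
    simpa [hm.ne', hb.ne', hA₀.ne'] using hxy
  refine ((hinf.sdiff (Set.finite_Iic m)).image hinj.injOn).mono ?_
  rintro _ ⟨n, ⟨⟨-, hp, hq⟩, hmn⟩, rfl⟩
  have not_dvd {c : ℕ} (hc : 0 < c) : ¬ c * n + 1 ∣ m :=
    Nat.not_dvd_of_pos_of_lt hm <|
      (not_le.1 hmn).trans_le ((Nat.le_mul_of_pos_left n hc).trans (Nat.le_succ _))
  exact ⟨by positivity, totient_eq_totient_add hAB h hA hB hp (not_dvd ha) hq (not_dvd hb)⟩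

section PairShift

variable {a b : ℕ}

lemma div_gcd_mul_div_gcd_pos (ha : 0 < a) (hb : 0 < b) : 0 < a / a.gcd b * (b / a.gcd b) :=
  Nat.mul_pos (Nat.div_gcd_pos_of_pos_left b ha) (Nat.div_gcd_pos_of_pos_right a hb)

lemma div_gcd_lt_div_gcd (hab : a < b) : a / a.gcd b < b / a.gcd b :=
  Nat.div_lt_div_of_lt_of_dvd (Nat.gcd_dvd_right a b) hab

lemma pairShift_pos (hab : a < b) : 0 < pairShift a b :=
  Nat.mul_pos (Nat.radical_pos _) (Nat.sub_pos_of_lt (div_gcd_lt_div_gcd hab))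

lemma even_pairShift (ha : 0 < a) (hb : 0 < b) : Even (pairShift a b) := by
  rw [pairShift, Nat.even_mul]
  by_cases hprod : Even (a / a.gcd b * (b / a.gcd b))
  · left
    rw [even_iff_two_dvd] at hprod ⊢
    exact (dvd_radical_iff_of_irreducible Nat.prime_two.prime.irreducible
      (div_gcd_mul_div_gcd_pos ha hb).ne').2 hprod
  · right
    rw [Nat.not_even_iff_odd, Nat.odd_mul] at hprod
    exact hprod.2.tsub_odd hprod.1

lemma isTotientShift_of_pairShift_dvd {k : ℕ} (ha : 0 < a) (hab : a < b)
    (hinf : (primePairs a b).Infinite) (hk : 0 < k) (hdvd : pairShift a b ∣ k) :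
    IsTotientShift k := by
  have hb : 0 < b := ha.trans hab
  have hne := (div_gcd_mul_div_gcd_pos ha hb).ne'
  have hcross : a * (b / a.gcd b) = b * (a / a.gcd b) := by
    rw [← Nat.mul_div_assoc a (Nat.gcd_dvd_right a b), ← Nat.mul_div_assoc b (Nat.gcd_dvd_left a b),
      mul_comm]
  obtain ⟨t, rfl⟩ := hdvd
  rw [pairShift, mul_right_comm]
  refine isTotientShift_mul_sub ha hb (Nat.div_gcd_pos_of_pos_left b ha)
    (div_gcd_lt_div_gcd hab).le hcross
    (Nat.mul_pos (Nat.radical_pos _) (Nat.pos_of_mul_pos_left hk)) ?_ ?_ hinf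
  · exact (radical_dvd_radical (dvd_mul_right _ _) hne).mul_right t
  · exact (radical_dvd_radical (dvd_mul_left _ _) hne).mul_right t

lemma pairShift_le_of_dvd_pow {r e f : ℕ} (ha : 0 < a) (hb : 0 < b) (har : a ∣ r ^ e)
    (hbr : b ∣ r ^ f) :
    pairShift a b ≤
      (a / a.gcd b * (b / a.gcd b)).gcd r * (b / a.gcd b - a / a.gcd b) := by
  have hpos := div_gcd_mul_div_gcd_pos ha hb
  have hpow : a / a.gcd b * (b / a.gcd b) ∣ r ^ (e + f) := by
    rw [pow_add]
    exact mul_dvd_mul ((Nat.div_dvd_of_dvd (Nat.gcd_dvd_left a b)).trans har)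
      ((Nat.div_dvd_of_dvd (Nat.gcd_dvd_right a b)).trans hbr)
  have hrad : radical (a / a.gcd b * (b / a.gcd b)) ∣ (a / a.gcd b * (b / a.gcd b)).gcd r :=
    Nat.dvd_gcd radical_dvd_self ((exists_dvd_pow_iff_radical_dvd hpos.ne').1 ⟨_, hpow⟩)
  exact Nat.mul_le_mul_right _ (Nat.le_of_dvd (Nat.gcd_pos_of_pos_left r hpos) hrad)

end PairShift

/-- Fifty `5`-smooth coefficients whose pairwise `pairShift`s are at most `3570`. -/
def smoothCoeffs : Finset ℕ :=
  {24, 30, 36, 40, 45, 48, 60, 72, 80, 90, 96, 108, 120, 135, 144, 150, 160, 180, 192, 200, 216,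
    225, 240, 270, 288, 300, 320, 324, 360, 375, 384, 400, 432, 450, 480, 500, 540, 576, 600, 648,
    720, 750, 900, 960, 1080, 1200, 1440, 1500, 1800, 2160}

lemma card_smoothCoeffs : smoothCoeffs.card = 50 := by
  decide +kernel

lemma dvd_of_mem_smoothCoeffs : ∀ a ∈ smoothCoeffs, a ∣ 30 ^ 7 := by
  decide +kernel

lemma pos_of_mem_smoothCoeffs {a : ℕ} (ha : a ∈ smoothCoeffs) : 0 < a :=
  Nat.pos_of_dvd_of_pos (dvd_of_mem_smoothCoeffs a ha) (by positivity)

lemma gcd_mul_sub_le_of_mem_smoothCoeffs : ∀ a ∈ smoothCoeffs, ∀ b ∈ smoothCoeffs,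
    (a / a.gcd b * (b / a.gcd b)).gcd 30 * (b / a.gcd b - a / a.gcd b) ≤ 3570 := by
  decide +kernel

lemma pairShift_le_of_mem_smoothCoeffs {a b : ℕ} (ha : a ∈ smoothCoeffs)
    (hb : b ∈ smoothCoeffs) : pairShift a b ≤ 3570 :=
  (pairShift_le_of_dvd_pow (pos_of_mem_smoothCoeffs ha) (pos_of_mem_smoothCoeffs hb)
    (dvd_of_mem_smoothCoeffs a ha) (dvd_of_mem_smoothCoeffs b hb)).trans
    (gcd_mul_sub_le_of_mem_smoothCoeffs a ha b hb)

lemma floor_div_le_ncard {P : ℕ → Prop} {l : ℕ} (h : ∀ k, 0 < k → l ∣ k → P k) (x : ℝ) :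
    ⌊x / l⌋₊ ≤ {k : ℕ | 0 < k ∧ (k : ℝ) ≤ x ∧ P k}.ncard := by
  have hfin : {k : ℕ | 0 < k ∧ (k : ℝ) ≤ x ∧ P k}.Finite :=
    (Set.finite_Iic ⌊x⌋₊).subset fun _ hk ↦ Nat.le_floor hk.2.1
  rw [Nat.floor_div_natCast, ← Nat.Ioc_filter_dvd_card_eq_div, ← Set.ncard_coe_finset]
  refine Set.ncard_le_ncard (fun k hk ↦ ?_) hfin
  simp only [Finset.coe_filter, Finset.mem_Ioc, Set.mem_ofPred_eq] at hk
  obtain ⟨⟨hk₀, hkx⟩, hdvd⟩ := hk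
  exact ⟨hk₀, (Nat.le_floor_iff' hk₀.ne').1 hkx, h k hk₀ hdvd⟩

/-- Assuming the consequence of `DHL*(50;2)`, there is an even `ℓ ≤ 3570` such that
`S_k` holds whenever `ℓ ∣ k`; consequently for every real `x ≥ 1` there are at
least `⌊x/3570⌋` positive integers `k ≤ x` for which `φ(n) = φ(n+k)` has
infinitely many solutions. -/
theorem stmt_6
    (hDHL : ∀ a : Fin 50 → ℕ, (∀ i, 0 < a i) → Function.Injective a →
      ∃ i j : Fin 50, i ≠ j ∧
        {n : ℕ | 0 < n ∧ (a i * n + 1).Prime ∧ (a j * n + 1).Prime}.Infinite) :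
    (∃ ℓ : ℕ, 0 < ℓ ∧ Even ℓ ∧ ℓ ≤ 3570 ∧
      ∀ k : ℕ, 0 < k → ℓ ∣ k →
        {n : ℕ | 0 < n ∧ Nat.totient n = Nat.totient (n + k)}.Infinite) ∧
    ∀ x : ℝ, 1 ≤ x →
      ⌊x / 3570⌋₊ ≤
        {k : ℕ | 0 < k ∧ (k : ℝ) ≤ x ∧
          {n : ℕ | 0 < n ∧ Nat.totient n = Nat.totient (n + k)}.Infinite}.ncard := by
  obtain ⟨a, ha, b, hb, hab, hinf⟩ :=
    exists_lt_infinite_primePairs card_smoothCoeffs (fun _ ↦ pos_of_mem_smoothCoeffs) hDHL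
  have ha₀ : 0 < a := pos_of_mem_smoothCoeffs ha
  have hpos : 0 < pairShift a b := pairShift_pos hab
  have hle : pairShift a b ≤ 3570 := pairShift_le_of_mem_smoothCoeffs ha hb
  have hshift : ∀ k, 0 < k → pairShift a b ∣ k → IsTotientShift k :=
    fun _ ↦ isTotientShift_of_pairShift_dvd ha₀ hab hinf
  refine ⟨⟨pairShift a b, hpos, even_pairShift ha₀ (ha₀.trans hab), hle, hshift⟩, fun x hx ↦ ?_⟩
  calc
    ⌊x / 3570⌋₊ ≤ ⌊x / pairShift a b⌋₊ := by
      gcongr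
      exact_mod_cast hle
    _ ≤ _ := floor_div_le_ncard hshift x
end

section
/- Let A = {1, 2, 4, 5, 6, 7, 8, 9, 10, 11, 12, 13, 14, 15, 16, 17, 18, 19, 20, 21, 22, 23, 24, 25, 26, 27, 28, 29, 30, 31, 32, 33, 34, 35, 36, 37, 38, 39, 40, 41, 42, 43, 44, 45, 46, 47, 48, 49, 52, 56}. Then the least common multiple of the numbers κ(a,b) over all pairs a < b with a, b ∈ A equals 442720643463713815200 = 2⁵ · 3³ · 5² · 7 · 11 · 13 · 17 · 19 · 23 · 29 · 31 · 37 · 41 · 43 · 47. -/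
/-!
If `a < b` are coprime, then `κ(a, b) = (b - a) · rad a · rad b` with pairwise coprime factors, so
`κ(a, b)` divides `N` as soon as each factor does. The lcm in question is `N = lcm(1, …, 48)`.

Every element of `A` divides `N²`, hence has its radical dividing `N`. Differences of elements of
`A` are at most `55`, and the only positive integers up to `55` not dividing `N` are `49` and `53`.
The difference `53` does not occur in `A`, and `49` occurs only for the pair `(7, 56)`, which
reduces to `(1, 8)`. Conversely `n - 1` divides `κ(1, n)`, and for `n ∈ A` the values `n - 1`
cover `1, …, 48` except for `2`, which divides `4`.
-/

open UniqueFactorizationMonoid (radical radical_dvd_self radical_dvd_radical radical_mul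
  exists_dvd_pow_iff_radical_dvd)
open Nat (lcmUpto)

section Kappa

variable {a b N : ℕ}

theorem kappa_of_coprime (h : a.Coprime b) : kappa a b = (b - a) * (radical a * radical b) := by
  rw [← radical_mul (Nat.coprime_iff_isRelPrime.1 h), Nat.radical_eq_prod_primeFactors, kappa,
    h.gcd_eq_one, Nat.div_one, Nat.div_one]

theorem kappa_div_gcd (h : 0 < a.gcd b) : kappa (a / a.gcd b) (b / a.gcd b) = kappa a b := by
  simp only [kappa, (Nat.coprime_div_gcd_div_gcd h).gcd_eq_one, Nat.div_one]

theorem kappa_dvd_of_coprime (h : a.Coprime b) (hab : a ≤ b) (hsub : b - a ∣ N)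
    (ha : radical a ∣ N) (hb : radical b ∣ N) : kappa a b ∣ N := by
  have hrad : (radical a).Coprime (radical b) :=
    h.of_dvd radical_dvd_self radical_dvd_self
  have hsub_a : (b - a).Coprime (radical a) :=
    ((Nat.coprime_sub_self_left hab).2 h.symm).of_dvd_right radical_dvd_self
  have hsub_b : (b - a).Coprime (radical b) :=
    ((Nat.coprime_self_sub_left hab).2 h).of_dvd_right radical_dvd_self
  rw [kappa_of_coprime h]
  exact (hsub_a.mul_right hsub_b).mul_dvd_of_dvd_of_dvd hsub (hrad.mul_dvd_of_dvd_of_dvd ha hb)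

theorem kappa_dvd (ha₀ : a ≠ 0) (hab : a ≤ b) (hsub : b / a.gcd b - a / a.gcd b ∣ N)
    (ha : radical a ∣ N) (hb : radical b ∣ N) : kappa a b ∣ N := by
  have hgcd : 0 < a.gcd b := Nat.gcd_pos_of_pos_left b (Nat.pos_of_ne_zero ha₀)
  have hrad_a : radical (a / a.gcd b) ∣ radical a :=
    radical_dvd_radical (Nat.div_dvd_of_dvd (Nat.gcd_dvd_left a b)) ha₀
  have hrad_b : radical (b / a.gcd b) ∣ radical b :=
    radical_dvd_radical (Nat.div_dvd_of_dvd (Nat.gcd_dvd_right a b)) (by lia)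
  rw [← kappa_div_gcd hgcd]
  exact kappa_dvd_of_coprime (Nat.coprime_div_gcd_div_gcd hgcd) (Nat.div_le_div_right hab) hsub
    (hrad_a.trans ha) (hrad_b.trans hb)

end Kappa

theorem div_gcd_sub_div_gcd_dvd_sub (a b : ℕ) : b / a.gcd b - a / a.gcd b ∣ b - a := by
  refine ⟨a.gcd b, ?_⟩
  rw [Nat.sub_mul, Nat.div_mul_cancel (Nat.gcd_dvd_right a b),
    Nat.div_mul_cancel (Nat.gcd_dvd_left a b)]

/-- The least common multiple of `κ(a, b)` over all pairs `a < b` of elements of `A`. -/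
def lcmKappa (A : Finset ℕ) : ℕ :=
  ((A ×ˢ A).filter (fun p => p.1 < p.2)).lcm (fun p => kappa p.1 p.2)

section LcmKappa

variable {A : Finset ℕ} {N : ℕ}

theorem lcmKappa_dvd_iff :
    lcmKappa A ∣ N ↔ ∀ a ∈ A, ∀ b ∈ A, a < b → kappa a b ∣ N := by
  simp only [lcmKappa, Finset.lcm_dvd_iff, Finset.mem_filter, Finset.mem_product, Prod.forall]
  grind

theorem dvd_lcmKappa_of_succ_mem {n : ℕ} (h_one : 1 ∈ A) (hn₀ : 0 < n) (hn : n + 1 ∈ A) :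
    n ∣ lcmKappa A := by
  have hκ : kappa 1 (n + 1) ∣ lcmKappa A :=
    lcmKappa_dvd_iff.1 dvd_rfl 1 h_one (n + 1) hn (by lia)
  rw [kappa_of_coprime (Nat.coprime_one_left _), Nat.add_sub_cancel] at hκ
  exact dvd_of_mul_right_dvd hκ

end LcmKappa

/-- The 50-element set `A` of the theorem, given by the integers in `[1, 56]` it omits. -/
def fiftySet : Finset ℕ := Finset.Icc 1 56 \ {3, 50, 51, 53, 54, 55}

theorem mem_fiftySet {a : ℕ} :
    a ∈ fiftySet ↔ (1 ≤ a ∧ a ≤ 56) ∧ a ∉ ({3, 50, 51, 53, 54, 55} : Finset ℕ) := by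
  rw [fiftySet, Finset.mem_sdiff, Finset.mem_Icc]

theorem ne_zero_of_mem_fiftySet {a : ℕ} (ha : a ∈ fiftySet) : a ≠ 0 :=
  Nat.pos_iff_ne_zero.1 (mem_fiftySet.1 ha).1.1

theorem lcmUpto_48 : lcmUpto 48 = 442720643463713815200 := by
  decide +kernel

theorem dvd_lcmUpto_48 {d : ℕ} (hd₀ : 0 < d) (hd : d ≤ 55) (h49 : d ≠ 49) (h53 : d ≠ 53) :
    d ∣ lcmUpto 48 := by
  rcases le_or_gt d 48 with h | h
  · exact Finset.dvd_lcm (f := id) (Finset.mem_Icc.2 ⟨hd₀, h⟩)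
  · rw [lcmUpto_48]
    interval_cases d <;> first | contradiction | norm_num

theorem radical_dvd_lcmUpto_48_of_mem_fiftySet {a : ℕ} (ha : a ∈ fiftySet) :
    radical a ∣ lcmUpto 48 := by
  have h_sq : ∀ a ∈ fiftySet, a ∣ lcmUpto 48 ^ 2 := by
    rw [lcmUpto_48]
    decide +kernel
  exact (exists_dvd_pow_iff_radical_dvd (ne_zero_of_mem_fiftySet ha)).1 ⟨2, h_sq a ha⟩

theorem sub_ne_53_of_mem_fiftySet {a b : ℕ} (ha : a ∈ fiftySet) (hb : b ∈ fiftySet) :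
    b - a ≠ 53 := by
  simp only [mem_fiftySet, Finset.mem_insert, Finset.mem_singleton] at ha hb
  lia

theorem eq_seven_and_eq_56_of_sub_eq_49 {a b : ℕ} (ha : a ∈ fiftySet) (hb : b ∈ fiftySet)
    (h : b - a = 49) : a = 7 ∧ b = 56 := by
  simp only [mem_fiftySet, Finset.mem_insert, Finset.mem_singleton] at ha hb
  lia

theorem reduced_sub_dvd_lcmUpto_48_of_mem_fiftySet {a b : ℕ} (ha : a ∈ fiftySet) (hb : b ∈ fiftySet)
    (hab : a < b) : b / a.gcd b - a / a.gcd b ∣ lcmUpto 48 := by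
  by_cases h49 : b - a = 49
  · obtain ⟨rfl, rfl⟩ := eq_seven_and_eq_56_of_sub_eq_49 ha hb h49
    exact dvd_lcmUpto_48 (d := 7) (by lia) (by lia) (by lia) (by lia)
  · have ha_bounds := (mem_fiftySet.1 ha).1
    have hb_bounds := (mem_fiftySet.1 hb).1
    exact (div_gcd_sub_div_gcd_dvd_sub a b).trans <|
      dvd_lcmUpto_48 (by lia) (by lia) h49 (sub_ne_53_of_mem_fiftySet ha hb)

theorem lcmKappa_fiftySet_dvd : lcmKappa fiftySet ∣ lcmUpto 48 :=
  lcmKappa_dvd_iff.2 fun _ ha _ hb hab =>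
    kappa_dvd (ne_zero_of_mem_fiftySet ha) hab.le
      (reduced_sub_dvd_lcmUpto_48_of_mem_fiftySet ha hb hab)
      (radical_dvd_lcmUpto_48_of_mem_fiftySet ha)
      (radical_dvd_lcmUpto_48_of_mem_fiftySet hb)

theorem lcmUpto_48_dvd_lcmKappa_fiftySet : lcmUpto 48 ∣ lcmKappa fiftySet := by
  have h_succ {n : ℕ} (hn₀ : 0 < n) (hn : n + 1 ∈ fiftySet) : n ∣ lcmKappa fiftySet :=
    dvd_lcmKappa_of_succ_mem (by decide) hn₀ hn
  refine Finset.lcm_dvd fun n hn => ?_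
  rw [Finset.mem_Icc] at hn
  rw [id_eq]
  by_cases h2 : n = 2
  · subst h2
    exact (show 2 ∣ 4 by norm_num).trans (h_succ (by lia) (by decide))
  · refine h_succ (by lia) ?_
    simp only [mem_fiftySet, Finset.mem_insert, Finset.mem_singleton]
    lia

theorem lcmKappa_fiftySet : lcmKappa fiftySet = lcmUpto 48 :=
  Nat.dvd_antisymm lcmKappa_fiftySet_dvd lcmUpto_48_dvd_lcmKappa_fiftySet

/-- The lcm of `κ(a,b)` over all pairs `a < b` from the 50-element set `A`
equals `442720643463713815200 = 2⁵·3³·5²·7·11·13·17·19·23·29·31·37·41·43·47`. -/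
theorem stmt_7 (A : Finset ℕ)
    (hA : A = {1, 2, 4, 5, 6, 7, 8, 9, 10, 11, 12, 13, 14, 15, 16, 17, 18, 19, 20,
      21, 22, 23, 24, 25, 26, 27, 28, 29, 30, 31, 32, 33, 34, 35, 36, 37, 38, 39,
      40, 41, 42, 43, 44, 45, 46, 47, 48, 49, 52, 56}) :
    ((A ×ˢ A).filter (fun p => p.1 < p.2)).lcm (fun p => kappa p.1 p.2) =
        442720643463713815200 ∧
      (442720643463713815200 : ℕ) =
        2 ^ 5 * 3 ^ 3 * 5 ^ 2 * 7 * 11 * 13 * 17 * 19 * 23 * 29 * 31 * 37 * 41 * 43 * 47 := by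
  have hA' : A = fiftySet := hA.trans (by decide +kernel)
  refine ⟨?_, by norm_num⟩
  rw [hA', ← lcmUpto_48]
  exact lcmKappa_fiftySet
end

section
/- Let m ≥ 2 and suppose a₁, …, a_m are pairwise distinct positive integers such that there are infinitely many positive integers r for which a₁r+1, …, a_mr+1 are all prime. Then there exist pairwise distinct positive integers h₁, …, h_m such that for every positive integer ℓ, the simultaneous equations φ(n + ℓh₁) = φ(n + ℓh₂) = ⋯ = φ(n + ℓh_m) have infinitely many solutions in positive integers n. -/
/-!
If `a ^ 2 ∣ N` and `p = a * r + 1` is a prime not dividing `N`, then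
`N * r + N / a = (N / a) * p` has totient `φ (N / a) * (a * r)`. Since `a ∣ N / a`, the factor `a`
can be absorbed, `a * φ (N / a) = φ N`, and the resulting value `φ N * r` no longer depends on `a`.
Taking `M` to be a common multiple of all `a i ^ 2`, the shifts `h i = M / a i` work for every `ℓ`
by the case `N = ℓ * M`.
-/

theorem totient_mul_of_dvd {d n : ℕ} (hdn : d ∣ n) :
    Nat.totient (d * n) = d * Nat.totient n := by
  obtain rfl | hd := d.eq_zero_or_pos
  · simp
  · have hgcd := Nat.totient_gcd_mul_totient_mul d n
    rw [Nat.gcd_eq_left hdn, mul_assoc, mul_comm n.totient d] at hgcd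
    exact Nat.eq_of_mul_eq_mul_left (Nat.totient_pos.2 hd) hgcd

theorem totient_mul_add_div_of_prime {a N r : ℕ} (haN : a ^ 2 ∣ N) (hp : (a * r + 1).Prime)
    (hcop : N.Coprime (a * r + 1)) :
    Nat.totient (N * r + N / a) = Nat.totient N * r := by
  have ha : 0 < a := Nat.pos_of_ne_zero fun h => Nat.not_prime_one (by simpa [h] using hp)
  obtain ⟨b, hab, rfl⟩ : ∃ b, a ∣ b ∧ N = a * b := by
    obtain ⟨k, rfl⟩ := haN
    exact ⟨a * k, Dvd.intro k rfl, by ring⟩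
  calc Nat.totient (a * b * r + a * b / a)
      = Nat.totient (b * (a * r + 1)) := by rw [Nat.mul_div_cancel_left b ha]; ring_nf
    _ = Nat.totient b * (a * r) := by
      rw [Nat.totient_mul hcop.coprime_mul_left, Nat.totient_prime hp, Nat.add_sub_cancel]
    _ = Nat.totient (a * b) * r := by rw [totient_mul_of_dvd hab]; ring

theorem infinite_setOf_totient_add_div_eq {ι : Type*} {a : ι → ℕ} {N : ℕ} (hN : 0 < N)
    (haN : ∀ i, a i ^ 2 ∣ N) (hprimes : {r : ℕ | ∀ i, (a i * r + 1).Prime}.Infinite) :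
    {n : ℕ | 0 < n ∧
      ∀ i j, Nat.totient (n + N / a i) = Nat.totient (n + N / a j)}.Infinite := by
  have hlarge : ({r : ℕ | ∀ i, (a i * r + 1).Prime} \ Set.Iic N).Infinite :=
    hprimes.sdiff (Set.finite_Iic N)
  refine (hlarge.image (mul_right_injective₀ hN.ne').injOn).mono ?_
  rintro _ ⟨r, ⟨hp, hr⟩, rfl⟩
  have hNr : N < r := not_le.1 hr
  have htotient (i : ι) : Nat.totient (N * r + N / a i) = Nat.totient N * r := by
    have ha : 0 < a i := Nat.pos_of_dvd_of_pos ((dvd_pow_self _ two_ne_zero).trans (haN i)) hN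
    have hlt : N < a i * r + 1 :=
      (hNr.trans_le (Nat.le_mul_of_pos_left r ha)).trans (Nat.lt_succ_self _)
    exact totient_mul_add_div_of_prime (haN i) (hp i)
      (Nat.coprime_of_lt_prime hN.ne' hlt (hp i)).symm
  exact ⟨Nat.mul_pos hN (hN.trans hNr), fun i j => (htotient i).trans (htotient j).symm⟩

/-- If `a₁,…,a_m` (`m ≥ 2`) are pairwise distinct positive integers such that
`a₁r+1,…,a_mr+1` are simultaneously prime for infinitely many `r`, then there are
pairwise distinct positive integers `h₁,…,h_m` such that for every `ℓ ≥ 1` the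
equations `φ(n+ℓh₁) = ⋯ = φ(n+ℓh_m)` have infinitely many solutions `n`. -/
theorem stmt_9 (m : ℕ) (hm : 2 ≤ m) (a : Fin m → ℕ)
    (hapos : ∀ i, 0 < a i) (hainj : Function.Injective a)
    (hprimes : {r : ℕ | 0 < r ∧ ∀ i, (a i * r + 1).Prime}.Infinite) :
    ∃ h : Fin m → ℕ, (∀ i, 0 < h i) ∧ Function.Injective h ∧
      ∀ ℓ : ℕ, 0 < ℓ →
        {n : ℕ | 0 < n ∧ ∀ i j : Fin m,
          Nat.totient (n + ℓ * h i) = Nat.totient (n + ℓ * h j)}.Infinite := by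
  obtain ⟨M, hM, hsq⟩ : ∃ M, 0 < M ∧ ∀ i, a i ^ 2 ∣ M :=
    ⟨∏ i, a i ^ 2, Finset.prod_pos fun i _ => pow_pos (hapos i) 2,
      fun i => Finset.dvd_prod_of_mem (a · ^ 2) (Finset.mem_univ i)⟩
  have hdvd (i : Fin m) : a i ∣ M := (dvd_pow_self _ two_ne_zero).trans (hsq i)
  refine ⟨fun i => M / a i, fun i => Nat.div_pos (Nat.le_of_dvd hM (hdvd i)) (hapos i),
    fun i j hij => ?_, fun ℓ hℓ => ?_⟩
  · exact hainj ((Nat.div_eq_iff_eq_of_dvd_dvd hM.ne' (hdvd i) (hdvd j)).1 hij)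
  · have hinf := infinite_setOf_totient_add_div_eq (Nat.mul_pos hℓ hM)
      (fun i => (hsq i).mul_left ℓ) (hprimes.mono fun _ hr => hr.2)
    simpa only [Nat.mul_div_assoc ℓ (hdvd _)] using hinf
end

section
/- Let m ≥ 2 and let a₁, …, a_m be pairwise distinct positive integers. Set P = (a₁a₂⋯a_m)² and hⱼ = P/aⱼ for 1 ≤ j ≤ m. Let ℓ and r be positive integers such that for every j the number aⱼr+1 is prime and aⱼr+1 > ℓ·P. Then n = ℓ·P·r satisfies φ(n + ℓhⱼ) = φ(ℓ·P)·r for every j; in particular φ(n + ℓh₁) = φ(n + ℓh₂) = ⋯ = φ(n + ℓh_m). -/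
/-!
Write `ℓP = ab` with `a = aⱼ` and `b = ℓhⱼ`, so that `n + ℓhⱼ = abr + b = b(ar + 1)`. The prime
`ar + 1` does not divide `b`, so the totient of the product is `φ(b) · ar`, and
`a φ(b) = φ(ab) = φ(ℓP)` because every prime factor of `a` already divides `b`: this is what the
square in `P` is for.
-/

theorem totient_mul_of_dvd_s10 {a b : ℕ} (hab : a ∣ b) :
    Nat.totient (a * b) = a * Nat.totient b := by
  rcases a.eq_zero_or_pos with rfl | ha
  · simp
  · apply Nat.eq_of_mul_eq_mul_left (Nat.totient_pos.2 ha)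
    calc Nat.totient a * Nat.totient (a * b)
        = Nat.totient (a.gcd b) * Nat.totient (a * b) := by rw [Nat.gcd_eq_left hab]
      _ = Nat.totient a * Nat.totient b * a.gcd b := Nat.totient_gcd_mul_totient_mul a b
      _ = Nat.totient a * (a * Nat.totient b) := by rw [Nat.gcd_eq_left hab]; ring

theorem totient_mul_mul_add_self_of_prime {a b r : ℕ} (hab : a ∣ b) (hp : (a * r + 1).Prime)
    (hpb : ¬ a * r + 1 ∣ b) :
    Nat.totient (a * b * r + b) = Nat.totient (a * b) * r := by
  have hcoprime : b.Coprime (a * r + 1) := (hp.coprime_iff_not_dvd.2 hpb).symm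
  calc Nat.totient (a * b * r + b)
      = Nat.totient (b * (a * r + 1)) := by congr 1; ring
    _ = Nat.totient b * (a * r) := by
        rw [Nat.totient_mul hcoprime, Nat.totient_prime hp, Nat.add_sub_cancel]
    _ = Nat.totient (a * b) * r := by rw [totient_mul_of_dvd_s10 hab]; ring

theorem stmt_10_general {ι : Type*} {a : ι → ℕ} {P ℓ r : ℕ} (hsq : ∀ j, a j ^ 2 ∣ P)
    (hprime : ∀ j, (a j * r + 1).Prime) (hndvd : ∀ j, ¬ a j * r + 1 ∣ ℓ * P) :
    (∀ j, Nat.totient (ℓ * P * r + ℓ * (P / a j)) = Nat.totient (ℓ * P) * r) ∧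
      ∀ i j, Nat.totient (ℓ * P * r + ℓ * (P / a i)) =
        Nat.totient (ℓ * P * r + ℓ * (P / a j)) := by
  have htotient (j) : Nat.totient (ℓ * P * r + ℓ * (P / a j)) = Nat.totient (ℓ * P) * r := by
    have hmul_self : a j * a j ∣ P := sq (a j) ▸ hsq j
    have hdvd : a j ∣ P / a j := Nat.dvd_div_of_mul_dvd hmul_self
    have hfactor : ℓ * P = a j * (ℓ * (P / a j)) := by
      rw [mul_left_comm, Nat.mul_div_cancel' (dvd_of_mul_left_dvd hmul_self)]
    have hndvd_div : ¬ a j * r + 1 ∣ ℓ * (P / a j) := fun hd =>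
      hndvd j (hfactor ▸ hd.mul_left (a j))
    rw [hfactor]
    exact totient_mul_mul_add_self_of_prime (hdvd.mul_left ℓ) (hprime j) hndvd_div
  exact ⟨htotient, fun i j => (htotient i).trans (htotient j).symm⟩

/-- With `P = (a₁⋯a_m)²`, `hⱼ = P/aⱼ`: if each `aⱼr+1` is prime and exceeds `ℓP`,
then `n = ℓPr` satisfies `φ(n + ℓhⱼ) = φ(ℓP)·r` for every `j`; in particular all
the values `φ(n + ℓhⱼ)` coincide. -/
theorem stmt_10 (m : ℕ) (hm : 2 ≤ m) (a : Fin m → ℕ)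
    (hapos : ∀ i, 0 < a i) (hainj : Function.Injective a)
    (P : ℕ) (hP : P = (∏ i, a i) ^ 2)
    (h : Fin m → ℕ) (hh : ∀ j, h j = P / a j)
    (ℓ r : ℕ) (hl : 0 < ℓ) (hr : 0 < r)
    (hprime : ∀ j, (a j * r + 1).Prime)
    (hbig : ∀ j, ℓ * P < a j * r + 1)
    (n : ℕ) (hn : n = ℓ * P * r) :
    (∀ j, Nat.totient (n + ℓ * h j) = Nat.totient (ℓ * P) * r) ∧
      ∀ i j : Fin m, Nat.totient (n + ℓ * h i) = Nat.totient (n + ℓ * h j) := by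
  have hsq (j) : a j ^ 2 ∣ P :=
    hP ▸ pow_dvd_pow_of_dvd (Finset.dvd_prod_of_mem a (Finset.mem_univ j)) 2
  have hPpos : 0 < P := hP ▸ pow_pos (Finset.prod_pos fun i _ => hapos i) 2
  simpa only [hn, hh] using stmt_10_general hsq hprime fun j =>
    Nat.not_dvd_of_pos_of_lt (Nat.mul_pos hl hPpos) (hbig j)
end

section
/- Assume that for every choice of 4 pairwise distinct positive integers a₁, …, a₄ there exist indices i ≠ j such that there are infinitely many positive integers n with aᵢn+1 and aⱼn+1 both prime. Then for every positive integer k divisible by 6, the equation φ(n) = φ(n+k) has infinitely many solutions n. -/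
/-!
If `a * n + 1` and `b * n + 1` are prime, `b = a + d`, and `k = d * t`, then
`a * t * (b * n + 1)` and `b * t * (a * n + 1)` differ by exactly `k`. For `n` large, their
totients are `φ (a * t) * (b * n)` and `φ (b * t) * (a * n)`, and these agree as soon as `a * t`
and `b * t` have the same prime factors, because `φ m / m` depends only on the primes dividing `m`.
A prime dividing both `a` and `b` is harmless, and a prime dividing just one of them does not
divide `d`, so it divides `t` as soon as it divides `k`. For `1 ≤ a < b ≤ 4` it is therefore
enough that `6 ∣ k`.
-/

open scoped Nat

theorem mul_totient_eq_of_primeFactors_eq {m n : ℕ} (h : m.primeFactors = n.primeFactors) :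
    n * φ m = m * φ n := by
  have hℚ : (n * φ m : ℚ) = m * φ n := by
    rw [Nat.totient_eq_mul_prod_factors m, Nat.totient_eq_mul_prod_factors n, h]
    ring
  exact_mod_cast hℚ

theorem totient_mul_prime_of_lt {m p : ℕ} (hm : m ≠ 0) (hmp : m < p) (hp : p.Prime) :
    φ (m * p) = φ m * (p - 1) := by
  rw [Nat.totient_mul (Nat.coprime_of_lt_prime hm hmp hp).symm, Nat.totient_prime hp]

theorem primeFactors_mul_eq_primeFactors_add_mul {a d t : ℕ} (ha : a ≠ 0) (ht : t ≠ 0)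
    (h : ∀ p : ℕ, p.Prime → p ∣ a * (a + d) → p ∣ d * t) :
    (a * t).primeFactors = ((a + d) * t).primeFactors := by
  have dvd_iff (p : ℕ) (hp : p.Prime) : p ∣ a * t ↔ p ∣ (a + d) * t := by
    rw [hp.dvd_mul, hp.dvd_mul]
    refine or_congr_left' fun hpt => ?_
    have dvd_d (hpa : p ∣ a * (a + d)) : p ∣ d := (hp.dvd_mul.1 (h p hp hpa)).resolve_right hpt
    exact ⟨fun hpa => dvd_add hpa (dvd_d (hpa.mul_right _)),
      fun hpb => (Nat.dvd_add_left (dvd_d (hpb.mul_left _))).1 hpb⟩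
  ext p
  simp +contextual [Nat.mem_primeFactors, dvd_iff, ha, ht]

theorem totient_mul_prime_eq_totient_mul_prime_s12 {a b t n : ℕ} (ha : a ≠ 0) (hb : b ≠ 0) (ht : t ≠ 0)
    (h : (a * t).primeFactors = (b * t).primeFactors) (hat : a * t < b * n + 1)
    (hbt : b * t < a * n + 1) (hpa : (a * n + 1).Prime) (hpb : (b * n + 1).Prime) :
    φ (a * t * (b * n + 1)) = φ (b * t * (a * n + 1)) := by
  have hφ : b * φ (a * t) = a * φ (b * t) := by
    refine Nat.eq_of_mul_eq_mul_left (Nat.pos_of_ne_zero ht) ?_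
    linear_combination mul_totient_eq_of_primeFactors_eq h
  calc φ (a * t * (b * n + 1)) = φ (a * t) * (b * n) :=
        totient_mul_prime_of_lt (mul_ne_zero ha ht) hat hpb
    _ = φ (b * t) * (a * n) := by linear_combination n * hφ
    _ = φ (b * t * (a * n + 1)) := (totient_mul_prime_of_lt (mul_ne_zero hb ht) hbt hpa).symm

theorem infinite_totient_eq_totient_add_of_infinite_primes {a d t : ℕ} (ha : 0 < a) (ht : 0 < t)
    (h : ∀ p : ℕ, p.Prime → p ∣ a * (a + d) → p ∣ d * t)
    (hprimes : {n : ℕ | (a * n + 1).Prime ∧ ((a + d) * n + 1).Prime}.Infinite) :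
    {n : ℕ | 0 < n ∧ φ n = φ (n + d * t)}.Infinite := by
  refine Set.infinite_of_forall_exists_gt fun N => ?_
  obtain ⟨n, ⟨hpa, hpb⟩, hn⟩ := hprimes.exists_gt (N + (a + d) * t)
  have hat : a * t ≤ (a + d) * t := Nat.mul_le_mul_right t (Nat.le_add_right a d)
  have hna : n ≤ a * n := Nat.le_mul_of_pos_left n ha
  have hnb : n ≤ (a + d) * n := Nat.le_mul_of_pos_left n (by positivity)
  have hlt : n < a * t * ((a + d) * n + 1) :=
    (Nat.lt_succ_of_le hnb).trans_le (Nat.le_mul_of_pos_left _ (by positivity))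
  have hadd : a * t * ((a + d) * n + 1) + d * t = (a + d) * t * (a * n + 1) := by ring
  refine ⟨a * t * ((a + d) * n + 1), ⟨by positivity, ?_⟩, by omega⟩
  rw [hadd]
  exact totient_mul_prime_eq_totient_mul_prime_s12 ha.ne' (by positivity) ht.ne'
    (primeFactors_mul_eq_primeFactors_add_mul ha.ne' ht.ne' h) (by omega) (by omega) hpa hpb

theorem dvd_six_of_prime_of_le_four {p : ℕ} (hp : p.Prime) (hp4 : p ≤ 4) : p ∣ 6 := by
  have hne : p ≠ 4 := by rintro rfl; norm_num at hp
  exact hp.dvd_factorial (n := 3) |>.2 (by omega)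

theorem stmt_12_general
    (hprimes : ∃ i j : Fin 4, i ≠ j ∧
      {n : ℕ | 0 < n ∧ ((i + 1 : ℕ) * n + 1).Prime ∧ ((j + 1 : ℕ) * n + 1).Prime}.Infinite)
    (k : ℕ) (hk : 0 < k) (h6 : 6 ∣ k) :
    {n : ℕ | 0 < n ∧ φ n = φ (n + k)}.Infinite := by
  obtain ⟨i, j, hij, hinf⟩ := hprimes
  wlog hlt : i < j generalizing i j
  · exact this j i hij.symm (hinf.mono fun n hn => ⟨hn.1, hn.2.symm⟩)
      (lt_of_le_of_ne (not_lt.1 hlt) hij.symm)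
  obtain ⟨d, hd⟩ := Nat.exists_eq_add_of_lt hlt
  have hdvd : d + 1 ∣ k := (Nat.dvd_factorial (n := 3) d.succ_pos (by omega)).trans h6
  obtain ⟨t, rfl⟩ := hdvd
  have hj : (j + 1 : ℕ) = i + 1 + (d + 1) := by omega
  rw [hj] at hinf
  refine infinite_totient_eq_totient_add_of_infinite_primes i.val.succ_pos
    (Nat.pos_of_mul_pos_left hk) (fun p hp hpab => ?_) (hinf.mono fun n hn => hn.2)
  have hp4 : p ≤ 4 := by
    rcases hp.dvd_mul.1 hpab with h | h <;> have := Nat.le_of_dvd (by omega) h <;> omega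
  exact (dvd_six_of_prime_of_le_four hp hp4).trans h6

/-- Assuming the consequence of `DHL*(4;2)` (for any 4 pairwise distinct positive
integers some pair of forms `aᵢn+1`, `aⱼn+1` is simultaneously prime infinitely
often), `φ(n) = φ(n+k)` has infinitely many solutions for every positive `k`
divisible by `6`. -/
theorem stmt_12
    (hDHL : ∀ a : Fin 4 → ℕ, (∀ i, 0 < a i) → Function.Injective a →
      ∃ i j : Fin 4, i ≠ j ∧
        {n : ℕ | 0 < n ∧ (a i * n + 1).Prime ∧ (a j * n + 1).Prime}.Infinite) :
    ∀ k : ℕ, 0 < k → 6 ∣ k →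
      {n : ℕ | 0 < n ∧ Nat.totient n = Nat.totient (n + k)}.Infinite :=
  stmt_12_general (hDHL (fun i => i + 1) (fun i => i.val.succ_pos)
    ((add_left_injective 1).comp Fin.val_injective))
end

section
/- Let m ≥ 2 and t ≥ m. Let a₁, …, a_t be pairwise distinct positive integers satisfying aᵢ·σ(aⱼ) = aⱼ·σ(aᵢ) for all i, j (i.e. all ratios σ(aᵢ)/aᵢ are equal). Let A = lcm(a₁, …, a_t) and bᵢ = A/aᵢ. Suppose there exist indices i₁ < i₂ < ⋯ < i_m such that there are infinitely many positive integers r with b_{i₁}r − 1, …, b_{i_m}r − 1 all prime. Then there exist positive integers h₁ < h₂ < ⋯ < h_m such that for every positive integer ℓ with gcd(ℓ, A) = 1, the simultaneous equations σ(n + ℓh₁) = σ(n + ℓh₂) = ⋯ = σ(n + ℓh_m) have infinitely many solutions in positive integers n. -/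
/-- The sum-of-divisors function `σ`. -/
def sigma (n : ℕ) : ℕ := ∑ d ∈ n.divisors, d

/-!
For large `r`, a prime `p = (A / aᵢ) r - 1` divides neither `aᵢ` nor `ℓ`, so
`σ (ℓ aᵢ p) = σ ℓ * (σ aᵢ / aᵢ) * A r`, which does not depend on `i`. Moreover
`ℓ aᵢ p = ℓ (A r - aᵢ)`, so these numbers are `n + ℓ (A + 1 - aᵢ)` for `n = ℓ (A r - (A + 1))`,
and the shifts `A + 1 - aᵢ` are positive and independent of `r` and `ℓ`.
-/

theorem sigma_mul_of_coprime {x y : ℕ} (h : x.Coprime y) :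
    sigma (x * y) = sigma x * sigma y := by
  simpa only [sigma, ArithmeticFunction.sigma_one_apply] using
    (ArithmeticFunction.isMultiplicative_sigma (k := 1)).map_mul_of_coprime h

theorem sigma_prime {p : ℕ} (hp : p.Prime) : sigma p = p + 1 := by
  rw [sigma, hp.sum_divisors, add_comm]

theorem sigma_mul_prime_eq_sigma_mul_prime {a a' p p' : ℕ} (ha : 0 < a)
    (hp : p.Prime) (hp' : p'.Prime) (hap : a.Coprime p) (hap' : a'.Coprime p')
    (hratio : a * sigma a' = a' * sigma a) (hpp' : a * (p + 1) = a' * (p' + 1)) :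
    sigma (a * p) = sigma (a' * p') := by
  rw [sigma_mul_of_coprime hap, sigma_mul_of_coprime hap', sigma_prime hp, sigma_prime hp']
  refine Nat.eq_of_mul_eq_mul_left ha ?_
  calc a * (sigma a * (p + 1)) = sigma a * (a * (p + 1)) := by ring
    _ = sigma a * (a' * (p' + 1)) := by rw [hpp']
    _ = a' * sigma a * (p' + 1) := by ring
    _ = a * sigma a' * (p' + 1) := by rw [hratio]
    _ = a * (sigma a' * (p' + 1)) := by ring

theorem coprime_mul_sub_one_of_prime {c r x : ℕ} (hp : (c * r - 1).Prime) (hx : 0 < x)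
    (hxr : x + 1 < r) : x.Coprime (c * r - 1) := by
  have hc : 0 < c := Nat.pos_of_ne_zero fun h => Nat.not_prime_zero (by simpa [h] using hp)
  have hr : r ≤ c * r := Nat.le_mul_of_pos_left r hc
  exact (Nat.coprime_of_lt_prime hx.ne' (by omega) hp).symm

theorem mul_sub_add_mul_sub_eq_mul_mul_sub_one {a k q : ℕ} (ℓ : ℕ) (hak : a ≤ k) (hk : k ≤ a * q) :
    ℓ * (a * q - k) + ℓ * (k - a) = ℓ * (a * (q - 1)) := by
  rw [← mul_add, Nat.sub_add_sub_cancel hk hak, Nat.mul_sub_one]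

theorem sigma_mul_sub_add_mul_shift_eq {ι : Type*} {a : ι → ℕ} {A ℓ r : ℕ} (hA : 0 < A)
    (haA : ∀ i, a i ∣ A) (hratio : ∀ i j, a i * sigma (a j) = a j * sigma (a i))
    (hℓ : 0 < ℓ) (hℓA : ℓ.Coprime A) (hAr : A + 1 < r) (hℓr : ℓ + 1 < r)
    (hprime : ∀ i, (A / a i * r - 1).Prime) (i j : ι) :
    sigma (ℓ * (A * r - (A + 1)) + ℓ * (A + 1 - a i)) =
      sigma (ℓ * (A * r - (A + 1)) + ℓ * (A + 1 - a j)) := by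
  have ha (i : ι) : 0 < a i := Nat.pos_of_dvd_of_pos (haA i) hA
  have ha_le (i : ι) : a i ≤ A := Nat.le_of_dvd hA (haA i)
  have hmul (i : ι) : a i * (A / a i * r) = A * r := by
    rw [← mul_assoc, Nat.mul_div_cancel' (haA i)]
  have hsucc (i : ι) : a i * (A / a i * r - 1 + 1) = A * r := by
    rw [Nat.sub_add_cancel (Nat.lt_of_sub_pos (hprime i).pos).le, hmul]
  have hap (i : ι) : (a i).Coprime (A / a i * r - 1) :=
    coprime_mul_sub_one_of_prime (hprime i) (ha i) (by have := ha_le i; omega)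
  have hℓap (i : ι) : ℓ.Coprime (a i * (A / a i * r - 1)) :=
    (hℓA.coprime_dvd_right (haA i)).mul_right (coprime_mul_sub_one_of_prime (hprime i) hℓ hℓr)
  have hshift (i : ι) : ℓ * (A * r - (A + 1)) + ℓ * (A + 1 - a i) =
      ℓ * (a i * (A / a i * r - 1)) := by
    rw [← hmul i, mul_sub_add_mul_sub_eq_mul_mul_sub_one ℓ ((ha_le i).trans A.le_succ)
      (by rw [hmul]; exact hAr.le.trans (Nat.le_mul_of_pos_left r hA))]
  rw [hshift, hshift, sigma_mul_of_coprime (hℓap i), sigma_mul_of_coprime (hℓap j),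
    sigma_mul_prime_eq_sigma_mul_prime (ha i) (hprime i) (hprime j) (hap i) (hap j)
      (hratio i j) ((hsucc i).trans (hsucc j).symm)]

theorem infinite_setOf_sigma_add_mul_shift_eq {ι : Type*} {a : ι → ℕ} {A ℓ : ℕ} (hA : 0 < A)
    (haA : ∀ i, a i ∣ A) (hratio : ∀ i j, a i * sigma (a j) = a j * sigma (a i))
    (hprimes : {r : ℕ | ∀ i, (A / a i * r - 1).Prime}.Infinite)
    (hℓ : 0 < ℓ) (hℓA : ℓ.Coprime A) :
    {n : ℕ | 0 < n ∧ ∀ i j,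
      sigma (n + ℓ * (A + 1 - a i)) = sigma (n + ℓ * (A + 1 - a j))}.Infinite := by
  refine Set.infinite_of_forall_exists_gt fun N => ?_
  obtain ⟨r, hprime, hr⟩ := hprimes.exists_gt (N + ℓ + A + 1)
  have hAr : r ≤ A * r := Nat.le_mul_of_pos_left r hA
  have hn : N < ℓ * (A * r - (A + 1)) :=
    (by omega : N < A * r - (A + 1)).trans_le (Nat.le_mul_of_pos_left _ hℓ)
  exact ⟨ℓ * (A * r - (A + 1)), ⟨N.zero_le.trans_lt hn,
    sigma_mul_sub_add_mul_shift_eq hA haA hratio hℓ hℓA (by omega) (by omega) hprime⟩, hn⟩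

theorem stmt_13_general {m : ℕ} {a : Fin m → ℕ} {A : ℕ} (hA : 0 < A) (haA : ∀ j, a j ∣ A)
    (hainj : Function.Injective a) (hratio : ∀ i j, a i * sigma (a j) = a j * sigma (a i))
    (hprimes : {r : ℕ | ∀ j, (A / a j * r - 1).Prime}.Infinite) :
    ∃ h : Fin m → ℕ, StrictMono h ∧ (∀ j, 0 < h j) ∧
      ∀ ℓ : ℕ, 0 < ℓ → ℓ.Coprime A →
        {n : ℕ | 0 < n ∧ ∀ i j, sigma (n + ℓ * h i) = sigma (n + ℓ * h j)}.Infinite := by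
  let shift : Fin m → ℕ := fun j => A + 1 - a j
  have hle (j : Fin m) : a j ≤ A := Nat.le_of_dvd hA (haA j)
  have hshift : Function.Injective shift := fun i j (hij : A + 1 - a i = A + 1 - a j) =>
    hainj (by have := hle i; have := hle j; omega)
  refine ⟨shift ∘ Tuple.sort shift,
    (Tuple.monotone_sort shift).strictMono_of_injective (hshift.comp (Equiv.injective _)),
    fun j => Nat.sub_pos_of_lt (Nat.lt_succ_of_le (hle _)), fun ℓ hℓ hℓA => ?_⟩
  exact (infinite_setOf_sigma_add_mul_shift_eq hA haA hratio hprimes hℓ hℓA).mono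
    fun n hn => ⟨hn.1, fun i j => hn.2 _ _⟩

/-- If `a₁,…,a_t` all have the same ratio `σ(aᵢ)/aᵢ`, `A = lcm(a₁,…,a_t)`,
`bᵢ = A/aᵢ`, and some `m` of the forms `bᵢr - 1` are simultaneously prime for
infinitely many `r`, then there are `h₁ < ⋯ < h_m` such that for every `ℓ`
coprime to `A` the equations `σ(n+ℓh₁) = ⋯ = σ(n+ℓh_m)` have infinitely many
solutions `n`. -/
theorem stmt_13 (m t : ℕ) (hm : 2 ≤ m) (htm : m ≤ t)
    (a : Fin t → ℕ) (hapos : ∀ i, 0 < a i) (hainj : Function.Injective a)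
    (hfriends : ∀ i j, a i * sigma (a j) = a j * sigma (a i))
    (A : ℕ) (hA : A = Finset.univ.lcm a)
    (b : Fin t → ℕ) (hb : ∀ i, b i = A / a i)
    (idx : Fin m → Fin t) (hidx : StrictMono idx)
    (hprimes : {r : ℕ | 0 < r ∧ ∀ j : Fin m, (b (idx j) * r - 1).Prime}.Infinite) :
    ∃ h : Fin m → ℕ, StrictMono h ∧ (∀ j, 0 < h j) ∧
      ∀ ℓ : ℕ, 0 < ℓ → Nat.gcd ℓ A = 1 →
        {n : ℕ | 0 < n ∧ ∀ i j : Fin m,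
          sigma (n + ℓ * h i) = sigma (n + ℓ * h j)}.Infinite := by
  have hA₀ : 0 < A := by
    rw [hA, Nat.pos_iff_ne_zero, Ne, Finset.lcm_eq_zero_iff]
    exact fun ⟨i, _, hi⟩ => (hapos i).ne' hi
  have haA (i : Fin t) : a i ∣ A := hA ▸ Finset.dvd_lcm (Finset.mem_univ i)
  simp only [hb] at hprimes
  exact stmt_13_general hA₀ (fun j => haA (idx j)) (hainj.comp hidx.injective)
    (fun i j => hfriends (idx i) (idx j)) (hprimes.mono fun _ hr => hr.2)
end

section
/- Let k be an even positive integer and let n be a positive integer such that n+1 and 2n+1 are both prime and n+1 > k. Then φ(k·(2n+1)) = φ(2k·(n+1)). In particular, if there are infinitely many n with n+1 and 2n+1 both prime, then for every even k the equation φ(n) = φ(n+k) has infinitely many solutions. -/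
theorem not_dvd_of_primeFactors_eq {m n p : ℕ} (h : m.primeFactors = n.primeFactors)
    (hn : n ≠ 0) (hp : p.Prime) (hpm : ¬ p ∣ m) : ¬ p ∣ n := fun hpn ↦
  hpm (Nat.dvd_of_mem_primeFactors (h ▸ Nat.mem_primeFactors.mpr ⟨hp, hpn, hn⟩))

theorem totient_mul_mul_add_one_eq_of_primeFactors_eq {g a b r : ℕ}
    (hgab : (g * a).primeFactors = (g * b).primeFactors)
    (hp : (a * r + 1).Prime) (hq : (b * r + 1).Prime)
    (hpg : ¬ a * r + 1 ∣ g) (hqg : ¬ b * r + 1 ∣ g) :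
    (g * a * (b * r + 1)).totient = (g * b * (a * r + 1)).totient := by
  have hg : g ≠ 0 := by rintro rfl; exact hpg (dvd_zero _)
  have ha : a ≠ 0 := by rintro rfl; simp [Nat.not_prime_one] at hp
  have hb : b ≠ 0 := by rintro rfl; simp [Nat.not_prime_one] at hq
  have hpa : ¬ a * r + 1 ∣ g * a := by rwa [Nat.Coprime.dvd_mul_right (by simp)]
  have hqb : ¬ b * r + 1 ∣ g * b := by rwa [Nat.Coprime.dvd_mul_right (by simp)]
  have hpb : ¬ a * r + 1 ∣ g * b := not_dvd_of_primeFactors_eq hgab (mul_ne_zero hg hb) hp hpa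
  have hqa : ¬ b * r + 1 ∣ g * a := not_dvd_of_primeFactors_eq hgab.symm (mul_ne_zero hg ha) hq hqb
  have hratio : (g * a).totient * b = (g * b).totient * a := by
    refine Nat.eq_of_mul_eq_mul_right (Nat.pos_of_ne_zero hg) ?_
    linarith [totient_mul_eq_totient_mul_of_primeFactors_eq hgab]
  calc (g * a * (b * r + 1)).totient
      = (g * a).totient * b * r := by
        rw [mul_comm (g * a), Nat.totient_mul_of_prime_of_not_dvd hq hqa, Nat.add_sub_cancel]
        ring
    _ = (g * b).totient * a * r := by rw [hratio]
    _ = (g * b * (a * r + 1)).totient := by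
        rw [mul_comm (g * b), Nat.totient_mul_of_prime_of_not_dvd hp hpb, Nat.add_sub_cancel]
        ring

theorem infinite_setOf_totient_eq_totient_add {g a c : ℕ} (hg : 0 < g)
    (hgac : (g * a).primeFactors = (g * (a + c)).primeFactors)
    (hinf : {r : ℕ | (a * r + 1).Prime ∧ ((a + c) * r + 1).Prime}.Infinite) :
    {m : ℕ | 0 < m ∧ m.totient = (m + g * c).totient}.Infinite := by
  refine Set.infinite_of_forall_exists_gt fun N ↦ ?_
  obtain ⟨r, ⟨hp, hq⟩, hr⟩ := hinf.exists_gt (N + g)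
  have ha : 0 < a := Nat.pos_of_ne_zero (by rintro rfl; simp [Nat.not_prime_one] at hp)
  have hrp : r < a * r + 1 := Nat.lt_succ_of_le (Nat.le_mul_of_pos_left r ha)
  have hpq : a * r + 1 ≤ (a + c) * r + 1 := by gcongr; exact Nat.le_add_right a c
  have hpg : ¬ a * r + 1 ∣ g := Nat.not_dvd_of_pos_of_lt hg (by omega)
  have hqg : ¬ (a + c) * r + 1 ∣ g := Nat.not_dvd_of_pos_of_lt hg (by omega)
  refine ⟨g * a * ((a + c) * r + 1), ⟨by positivity, ?_⟩, ?_⟩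
  · rw [totient_mul_mul_add_one_eq_of_primeFactors_eq hgac hp hq hpg hqg]
    congr 1
    ring
  · calc N < (a + c) * r + 1 := by omega
      _ ≤ g * a * ((a + c) * r + 1) := Nat.le_mul_of_pos_left _ (Nat.mul_pos hg ha)

theorem stmt_17_general {g a c : ℕ} (hg : 0 < g)
    (hgac : (g * a).primeFactors = (g * (a + c)).primeFactors) :
    (∀ r : ℕ, (a * r + 1).Prime → ((a + c) * r + 1).Prime →
      ¬ a * r + 1 ∣ g → ¬ (a + c) * r + 1 ∣ g →
        (g * a * ((a + c) * r + 1)).totient = (g * (a + c) * (a * r + 1)).totient) ∧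
      ({r : ℕ | (a * r + 1).Prime ∧ ((a + c) * r + 1).Prime}.Infinite →
        {m : ℕ | 0 < m ∧ m.totient = (m + g * c).totient}.Infinite) :=
  ⟨fun _ ↦ totient_mul_mul_add_one_eq_of_primeFactors_eq hgac,
    infinite_setOf_totient_eq_totient_add hg hgac⟩

theorem primeFactors_mul_of_dvd {d k : ℕ} (h : d ∣ k) : (k * d).primeFactors = k.primeFactors := by
  obtain rfl | hk := eq_or_ne k 0
  · rw [zero_mul]
  · rw [Nat.primeFactors_mul hk (ne_zero_of_dvd_ne_zero hk h), Finset.union_eq_left]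
    exact Nat.primeFactors_mono h hk

/-- If `k` is even, `n+1` and `2n+1` are prime and `n+1 > k`, then
`φ(k(2n+1)) = φ(2k(n+1))`.  In particular, if there are infinitely many `n` with
`n+1` and `2n+1` both prime, then for every even positive `k` the equation
`φ(n) = φ(n+k)` has infinitely many solutions. -/
theorem stmt_17 (k n : ℕ) (hk : 0 < k) (hkeven : Even k) (hn : 0 < n)
    (hp : (n + 1).Prime) (hq : (2 * n + 1).Prime) (hnk : k < n + 1) :
    Nat.totient (k * (2 * n + 1)) = Nat.totient (2 * k * (n + 1)) ∧
      ({n : ℕ | 0 < n ∧ (n + 1).Prime ∧ (2 * n + 1).Prime}.Infinite →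
        ∀ k' : ℕ, 0 < k' → Even k' →
          {m : ℕ | 0 < m ∧ Nat.totient m = Nat.totient (m + k')}.Infinite) := by
  have general {j : ℕ} (hj : 0 < j) (hjeven : Even j) :=
    stmt_17_general (a := 1) (c := 1) hj (by simp [primeFactors_mul_of_dvd hjeven.two_dvd])
  simp only [one_mul, mul_one, one_add_one_eq_two] at general
  refine ⟨?_, fun hinf k' hk' hk'even ↦ (general hk' hk'even).2 (hinf.mono fun _ h ↦ h.2)⟩
  rw [mul_comm 2 k]
  exact (general hk hkeven).1 n hp hq (Nat.not_dvd_of_pos_of_lt hk hnk)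
    (Nat.not_dvd_of_pos_of_lt hk (by omega))
end

section
/- Let m be a positive integer with σ(m)·(m+1) = σ(m+1)·m, and let r > m+1 be a positive integer such that rm − 1 and r(m+1) − 1 are both prime. Then σ(m·(r(m+1) − 1)) = σ((m+1)·(rm − 1)); note that the two arguments differ by exactly 1, so this produces a solution of σ(n) = σ(n+1). -/
/-!
If `p = ra - 1` and `q = rb - 1` are primes, then `σ(p) = ra` and `σ(q) = rb`, so multiplicativity
turns `σ(aq) = σ(bp)` into `r (σ(a) b) = r (σ(b) a)`. For `b = a + 1`, the relation
`σ(a) b = σ(b) a` fails for `1 ≤ a ≤ 3`, and from `a = 4` on `p` and `q` cannot both be prime when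
`r = 1`, whereas for `r ≥ 2` they exceed `b` and `a`, so the coprimality needed is automatic.
-/

theorem sigma_eq_arithmeticFunction_sigma_one (n : ℕ) :
    sigma n = ArithmeticFunction.sigma 1 n :=
  (ArithmeticFunction.sigma_one_apply n).symm

theorem sigma_mul_of_coprime_s18 {a b : ℕ} (hab : a.Coprime b) :
    sigma (a * b) = sigma a * sigma b := by
  simpa only [sigma_eq_arithmeticFunction_sigma_one] using
    ArithmeticFunction.isMultiplicative_sigma.map_mul_of_coprime hab

theorem sigma_sub_one_of_prime {n : ℕ} (hn : (n - 1).Prime) : sigma (n - 1) = n := by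
  have : 0 < n - 1 := hn.pos
  rw [sigma_prime hn]
  omega

theorem sigma_mul_eq_sigma_mul_of_prime {a b r : ℕ} (hab : sigma a * b = sigma b * a)
    (hp : (r * a - 1).Prime) (hq : (r * b - 1).Prime)
    (haq : a.Coprime (r * b - 1)) (hbp : b.Coprime (r * a - 1)) :
    sigma (a * (r * b - 1)) = sigma (b * (r * a - 1)) :=
  calc sigma (a * (r * b - 1)) = sigma a * (r * b) := by
        rw [sigma_mul_of_coprime_s18 haq, sigma_sub_one_of_prime hq]
    _ = sigma b * (r * a) := by linear_combination r * hab
    _ = sigma (b * (r * a - 1)) := by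
        rw [sigma_mul_of_coprime_s18 hbp, sigma_sub_one_of_prime hp]

theorem mul_mul_succ_sub_one_eq_add_one {m r : ℕ} (h : 0 < r * m) :
    m * (r * (m + 1) - 1) = (m + 1) * (r * m - 1) + 1 := by
  obtain ⟨p, hp⟩ : ∃ p, r * m = p + 1 := Nat.exists_eq_add_one.mpr h
  have hq : r * (m + 1) - 1 = p + r := by rw [mul_add_one, hp]; omega
  rw [hq, hp, Nat.add_sub_cancel]
  linear_combination hp

theorem four_le_of_sigma_mul_succ_eq {m : ℕ} (hm : 0 < m)
    (h : sigma m * (m + 1) = sigma (m + 1) * m) : 4 ≤ m := by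
  by_contra! hlt
  interval_cases m <;> revert h <;> decide

theorem two_le_of_prime_mul_sub_one {m r : ℕ} (hm : 4 ≤ m)
    (hp : (r * m - 1).Prime) (hq : (r * (m + 1) - 1).Prime) : 2 ≤ r := by
  by_contra! hr
  interval_cases r
  · simp [Nat.not_prime_zero] at hp
  · have hp_odd := hp.eq_two_or_odd
    have hq_odd := hq.eq_two_or_odd
    omega

theorem stmt_18_general (m r : ℕ)
    (hfriend : sigma m * (m + 1) = sigma (m + 1) * m)
    (hp : (r * m - 1).Prime) (hq : (r * (m + 1) - 1).Prime) :
    sigma (m * (r * (m + 1) - 1)) = sigma ((m + 1) * (r * m - 1)) ∧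
      m * (r * (m + 1) - 1) = (m + 1) * (r * m - 1) + 1 := by
  have hrm : 0 < r * m := hp.pos.trans_le (Nat.sub_le _ _)
  have hm : 4 ≤ m := four_le_of_sigma_mul_succ_eq (Nat.pos_of_mul_pos_left hrm) hfriend
  have hr : 2 ≤ r := two_le_of_prime_mul_sub_one hm hp hq
  have hmq : m < r * (m + 1) - 1 := by
    have := Nat.mul_le_mul_right (m + 1) hr
    omega
  have hmp : m + 1 < r * m - 1 := by
    have := Nat.mul_le_mul_right m hr
    omega
  exact ⟨sigma_mul_eq_sigma_mul_of_prime hfriend hp hq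
      (Nat.coprime_of_lt_prime (by omega) hmq hq).symm
      (Nat.coprime_of_lt_prime m.succ_ne_zero hmp hp).symm,
    mul_mul_succ_sub_one_eq_add_one hrm⟩

/-- If `σ(m)/m = σ(m+1)/(m+1)` and `r > m+1` with `rm - 1` and `r(m+1) - 1` both
prime, then `σ(m(r(m+1) - 1)) = σ((m+1)(rm - 1))`; the two arguments differ by
exactly `1`, giving a solution of `σ(n) = σ(n+1)`. -/
theorem stmt_18 (m r : ℕ) (hm : 0 < m)
    (hfriend : sigma m * (m + 1) = sigma (m + 1) * m)
    (hr : m + 1 < r)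
    (hp : (r * m - 1).Prime) (hq : (r * (m + 1) - 1).Prime) :
    sigma (m * (r * (m + 1) - 1)) = sigma ((m + 1) * (r * m - 1)) ∧
      m * (r * (m + 1) - 1) = (m + 1) * (r * m - 1) + 1 :=
  stmt_18_general m r hfriend hp hq
end
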